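/- arXiv:1506.08927 — 3 statements merged into one kernel-verified Lean document; each statement's English description precedes it below -/
import Mathlib

section
/- Let d = {{i_1,j_1}, …, {i_n,j_n}} be a strand diagram with n strands on {0,…,n} and let ξ̄ = {X_{i_1,j_1}, …, X_{i_n,j_n}} be the corresponding complete exceptional collection of Q_ε. Then the map sending a complete exceptional sequence (V_1, …, V_n) whose underlying set of representations is ξ̄ to the function f : P_d → {1,…,n} defined by f(chord of V_ℓ) = n+1−ℓ is a bijection from the set of complete exceptional sequences that can be formed from the representations of ξ̄ onto the set of linear extensions of the poset P_d. -/
namespace ESPaper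

/-- Source of arrow `a m` (between vertices `m` and `m+1`): `m` if `ε m = +` (true). -/
def asrc (ε : ℕ → Bool) (m : ℕ) : ℕ := if ε m then m else m + 1

/-- Target of arrow `a m`. -/
def atgt (ε : ℕ → Bool) (m : ℕ) : ℕ := if ε m then m + 1 else m

/-- A representation of the type `A_n` quiver `Q_ε`: finite dimensional vector spaces at the
vertices `1, …, n` (the spaces at the remaining indices are required to be trivial, so that
the maps attached to indices outside `1, …, n-1` carry no information) together with a
linear map along each arrow `a m : asrc ε m → atgt ε m`, `1 ≤ m ≤ n-1`. -/
structure Rep (K : Type) [Field K] (n : ℕ) (ε : ℕ → Bool) : Type 1 where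
  V : ℕ → Type
  [instAdd : ∀ m, AddCommGroup (V m)]
  [instMod : ∀ m, Module K (V m)]
  [instFin : ∀ m, FiniteDimensional K (V m)]
  triv : ∀ m, m = 0 ∨ n < m → Subsingleton (V m)
  φ : ∀ m, V (asrc ε m) →ₗ[K] V (atgt ε m)

attribute [instance] Rep.instAdd Rep.instMod Rep.instFin

/-- A morphism of representations of `Q_ε`. -/
structure RepHom {K : Type} [Field K] {n : ℕ} {ε : ℕ → Bool} (A B : Rep K n ε) where
  app : ∀ m, A.V m →ₗ[K] B.V m
  comm : ∀ m, (app (atgt ε m)).comp (A.φ m) = (B.φ m).comp (app (asrc ε m))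

/-- Vertex space of the indecomposable `X_{i,j}` (for `0 ≤ i < j ≤ n`): `K` at the
vertices `i+1, …, j` and `0` elsewhere. -/
def XV (K : Type) [Field K] (n i j m : ℕ) : Submodule K K :=
  if i + 1 ≤ m ∧ m ≤ j ∧ m ≤ n then ⊤ else ⊥

/-- Arrow map of the indecomposable `X_{i,j}`: the identity whenever both endpoints of the
arrow lie in the support, and zero otherwise. -/
def Xφ (K : Type) [Field K] (n : ℕ) (ε : ℕ → Bool) (i j m : ℕ) :
    XV K n i j (asrc ε m) →ₗ[K] XV K n i j (atgt ε m) :=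
  if h : i + 1 ≤ atgt ε m ∧ atgt ε m ≤ j ∧ atgt ε m ≤ n then
    LinearMap.codRestrict _ (XV K n i j (asrc ε m)).subtype
      (fun x => by simp [XV, h.1, h.2.1, h.2.2])
  else 0

/-- The indecomposable representation `X_{i,j}` of `Q_ε`. -/
def Xrep (K : Type) [Field K] (n : ℕ) (ε : ℕ → Bool) (i j : ℕ) : Rep K n ε where
  V m := XV K n i j m
  instAdd _ := inferInstance
  instMod _ := inferInstance
  instFin _ := inferInstance
  triv m hm := by
    have hneg : ¬ (i + 1 ≤ m ∧ m ≤ j ∧ m ≤ n) := by omega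
    have hbot : XV K n i j m = ⊥ := by unfold XV; rw [if_neg hneg]
    show Subsingleton (XV K n i j m)
    rw [hbot]
    infer_instance
  φ m := Xφ K n ε i j m

variable {K : Type} [Field K]

/-- `Hom(A, B) = 0`. -/
def homZero {n : ℕ} {ε : ℕ → Bool} (A B : Rep K n ε) : Prop :=
  ∀ θ : RepHom A B, ∀ m, θ.app m = 0

/-- `Hom(A, B) ≠ 0`. -/
def homNonzero {n : ℕ} {ε : ℕ → Bool} (A B : Rep K n ε) : Prop :=
  ∃ θ : RepHom A B, ∃ m, θ.app m ≠ 0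

/-- `0 → B → E → A → 0` is a short exact sequence. -/
def IsSES {n : ℕ} {ε : ℕ → Bool} {B E A : Rep K n ε}
    (f : RepHom B E) (g : RepHom E A) : Prop :=
  (∀ m, Function.Injective (f.app m)) ∧ (∀ m, Function.Surjective (g.app m)) ∧
    (∀ m, LinearMap.range (f.app m) = LinearMap.ker (g.app m))

/-- The short exact sequence `0 → B → E → A → 0` splits. -/
def Splits {n : ℕ} {ε : ℕ → Bool} {E A : Rep K n ε} (g : RepHom E A) : Prop :=
  ∃ s : RepHom A E, ∀ m, (g.app m).comp (s.app m) = LinearMap.id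

/-- `Ext¹(A, B) ≠ 0`: there is a nonsplit short exact sequence `0 → B → E → A → 0`. -/
def extNonzero {n : ℕ} {ε : ℕ → Bool} (A B : Rep K n ε) : Prop :=
  ∃ (E : Rep K n ε) (f : RepHom B E) (g : RepHom E A), IsSES f g ∧ ¬ Splits g

/-- `Ext¹(A, B) = 0`. -/
def extZero {n : ℕ} {ε : ℕ → Bool} (A B : Rep K n ε) : Prop := ¬ extNonzero A B

/-- `(U, V)` is an exceptional pair: `Hom(V,U) = 0` and `Ext¹(V,U) = 0`. -/
def ExcPair {n : ℕ} {ε : ℕ → Bool} (U V : Rep K n ε) : Prop := homZero V U ∧ extZero V U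


/-- The chords `c = {c.1, c.2}` and `d = {d.1, d.2}` (with `c.1 < c.2`, `d.1 < d.2`) cross. -/
def Crosses (ε : ℕ → Bool) (c d : ℕ × ℕ) : Prop :=
  (c.1 < d.1 ∧ d.1 < c.2 ∧ c.2 < d.2 ∧ ε d.1 = ε c.2) ∨
  (d.1 < c.1 ∧ c.1 < d.2 ∧ d.2 < c.2 ∧ ε c.1 = ε d.2) ∨
  (c.1 < d.1 ∧ d.1 < d.2 ∧ d.2 < c.2 ∧ ε d.1 ≠ ε d.2) ∨
  (d.1 < c.1 ∧ c.1 < c.2 ∧ c.2 < d.2 ∧ ε c.1 ≠ ε c.2)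

/-- The chords `c` and `d` share an endpoint. -/
def SharesEndpoint (c d : ℕ × ℕ) : Prop :=
  c.1 = d.1 ∨ c.1 = d.2 ∨ c.2 = d.1 ∨ c.2 = d.2

/-- The chord `c` is clockwise from the chord `d` (chords written with `c.1 < c.2`, `d.1 < d.2`). -/
def Cw (ε : ℕ → Bool) (c d : ℕ × ℕ) : Prop :=
  (c.2 = d.1 ∧ ε c.2 = true) ∨
  (d.2 = c.1 ∧ ε c.1 = false) ∨
  (c.1 = d.1 ∧ ((c.2 < d.2 ∧ ε c.2 = false) ∨ (d.2 < c.2 ∧ ε d.2 = true))) ∨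
  (c.2 = d.2 ∧ ((c.1 < d.1 ∧ ε d.1 = false) ∨ (d.1 < c.1 ∧ ε c.1 = true)))

/-- The graph on `{0,…,n} ⊆ ℕ` determined by a finite set of chords. -/
def chordGraph (d : Finset (ℕ × ℕ)) : SimpleGraph ℕ :=
  SimpleGraph.fromEdgeSet {e : Sym2 ℕ | ∃ c ∈ d, e = s(c.1, c.2)}

/-- The graph on `{0,…,n} ⊆ ℕ` determined by a family of chords. -/
def chordGraphF {k : ℕ} (c : Fin k → ℕ × ℕ) : SimpleGraph ℕ :=
  SimpleGraph.fromEdgeSet {e : Sym2 ℕ | ∃ a : Fin k, e = s((c a).1, (c a).2)}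

/-- `d` is a strand diagram on `S_{n,ε}`: valid pairwise-noncrossing chords forming a forest. -/
def IsDiagram (n : ℕ) (ε : ℕ → Bool) (d : Finset (ℕ × ℕ)) : Prop :=
  (∀ c ∈ d, c.1 < c.2 ∧ c.2 ≤ n) ∧
  (∀ c ∈ d, ∀ c' ∈ d, ¬ Crosses ε c c') ∧
  (chordGraph d).IsAcyclic

/-- The family `c` is a strand diagram (pairwise-noncrossing chords forming a forest). -/
def IsDiagramF {k : ℕ} (ε : ℕ → Bool) (c : Fin k → ℕ × ℕ) : Prop :=
  (∀ a b : Fin k, ¬ Crosses ε (c a) (c b)) ∧ (chordGraphF c).IsAcyclic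

/-- The partial order of the poset `P_d`: `x ≤ y` iff there is a chain of chords of `d`
from `x` to `y` in which each chord shares an endpoint with, and is clockwise from,
the previous one. -/
def leD (ε : ℕ → Bool) (d : Finset (ℕ × ℕ)) : ℕ × ℕ → ℕ × ℕ → Prop :=
  Relation.ReflTransGen (fun x y => x ∈ d ∧ y ∈ d ∧ SharesEndpoint x y ∧ Cw ε y x)

/-- The sequence `(X_{c 0}, …, X_{c (k-1)})` of indecomposables is an exceptional sequence. -/
def IsExcSeq (K : Type) [Field K] (n : ℕ) {k : ℕ} (ε : ℕ → Bool) (c : Fin k → ℕ × ℕ) : Prop :=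
  ∀ a b : Fin k, a < b →
    ExcPair (Xrep K n ε (c a).1 (c a).2) (Xrep K n ε (c b).1 (c b).2)

/-- The set of indecomposables `{X_e : e ∈ d}` is an exceptional collection, i.e. it can be
ordered into an exceptional sequence. -/
def IsExcColl (K : Type) [Field K] (n : ℕ) (ε : ℕ → Bool) (d : Finset (ℕ × ℕ)) : Prop :=
  ∃ c : Fin d.card → ℕ × ℕ, Function.Injective c ∧ (∀ a, c a ∈ d) ∧ IsExcSeq K n ε c

/-- support predicate -/
def Sp (i j m : ℕ) : Prop := i < m ∧ m ≤ j

/-- coordinate -/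
def vL (K : Type) [Field K] (n : ℕ) (ε : ℕ → Bool) (i j m : ℕ) :
    (Xrep K n ε i j).V m →ₗ[K] K := (XV K n i j m).subtype

theorem vL_inj (n : ℕ) (ε : ℕ → Bool) (i j m : ℕ) :
    Function.Injective (vL K n ε i j m) := Subtype.val_injective

theorem mem_XV {n i j m : ℕ} (hj : j ≤ n) (x : K) : x ∈ XV K n i j m ↔ (Sp i j m ∨ x = 0) := by
  unfold XV Sp
  split_ifs with h
  · simp only [Submodule.mem_top, true_iff]; left; omega
  · simp only [Submodule.mem_bot]
    constructor
    · exact Or.inr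
    · rintro (h' | h')
      · omega
      · exact h'

/-- element with given coordinate -/
def el (n : ℕ) (ε : ℕ → Bool) (i j m : ℕ) (x : K) (h : x ∈ XV K n i j m) :
    (Xrep K n ε i j).V m := (⟨x, h⟩ : XV K n i j m)

theorem vL_el (n : ℕ) (ε : ℕ → Bool) (i j m : ℕ) (x : K) (h : x ∈ XV K n i j m) :
    vL K n ε i j m (el n ε i j m x h) = x := rfl

theorem vL_zero {n : ℕ} {ε : ℕ → Bool} {i j m : ℕ} (hj : j ≤ n) (h : ¬ Sp i j m)
    (x : (Xrep K n ε i j).V m) : vL K n ε i j m x = 0 := by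
  have h1 : vL K n ε i j m x ∈ XV K n i j m := Subtype.property (p := (· ∈ XV K n i j m)) x
  rcases (mem_XV hj _).1 h1 with h2 | h2
  · exact absurd h2 h
  · exact h2

theorem vL_φ {n : ℕ} {ε : ℕ → Bool} {i j m : ℕ} (hj : j ≤ n) (h : Sp i j (atgt ε m))
    (x : (Xrep K n ε i j).V (asrc ε m)) :
    vL K n ε i j _ ((Xrep K n ε i j).φ m x) = vL K n ε i j _ x := by
  have h' : i + 1 ≤ atgt ε m ∧ atgt ε m ≤ j ∧ atgt ε m ≤ n := by unfold Sp at h; omega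
  have : (Xrep K n ε i j).φ m = LinearMap.codRestrict _ (XV K n i j (asrc ε m)).subtype
      (fun x => by simp [XV, h'.1, h'.2.1, h'.2.2]) := by
    show Xφ K n ε i j m = _
    unfold Xφ; rw [dif_pos h']
  rw [this]; rfl

/-- hom scalar conditions -/
def HomSc (ε : ℕ → Bool) (i j k l : ℕ) (t : ℕ → K) : Prop :=
  (∀ m, ¬ (Sp i j m ∧ Sp k l m) → t m = 0) ∧
  ∀ m, Sp i j (asrc ε m) → Sp k l (atgt ε m) → t (asrc ε m) = t (atgt ε m)

theorem homZero_of {n : ℕ} {ε : ℕ → Bool} {i j k l : ℕ} (hj : j ≤ n) (hl : l ≤ n)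
    (H : ∀ t : ℕ → K, HomSc ε i j k l t → ∀ m, t m = 0) :
    homZero (Xrep K n ε i j) (Xrep K n ε k l) := by
  classical
  intro θ
  let u : ∀ m, (Xrep K n ε i j).V m := fun m =>
    el n ε i j m (if Sp i j m then 1 else 0) ((mem_XV hj _).2 (by split_ifs <;> tauto))
  have hu : ∀ m, vL K n ε i j m (u m) = if Sp i j m then 1 else 0 := fun m => vL_el ..
  have key := H (fun m => vL K n ε k l m (θ.app m (u m))) ⟨?_, ?_⟩
  · intro m
    ext x
    apply vL_inj
    have : x = (vL K n ε i j m x) • u m := by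
      apply vL_inj
      rw [map_smul, hu]
      split_ifs with h
      · simp
      · simp [vL_zero hj h]
    rw [this, map_smul, map_smul, key m]; simp
  · intro m hm
    by_cases h1 : Sp i j m
    · exact vL_zero hl (fun h2 => hm ⟨h1, h2⟩) _
    · have : u m = 0 := by
        apply vL_inj; rw [hu]; simp [h1]
      simp [this]
  · intro m h1 h2
    have hc := LinearMap.congr_fun (θ.comm m) (u (asrc ε m))
    simp only [LinearMap.comp_apply] at hc
    have : (Xrep K n ε i j).φ m (u (asrc ε m)) = u (atgt ε m) := by
      apply vL_inj
      by_cases h3 : Sp i j (atgt ε m)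
      · rw [vL_φ hj h3, hu, hu]; simp [h1, h3]
      · rw [vL_zero hj h3, vL_zero hj h3]
    rw [this] at hc
    show vL K n ε k l _ _ = vL K n ε k l _ _
    rw [hc, vL_φ hl h2]

/-- hom from scalars -/
def mkHom {n : ℕ} {ε : ℕ → Bool} {i j k l : ℕ} (hj : j ≤ n) (hl : l ≤ n)
    (t : ℕ → K) (ht : HomSc ε i j k l t) : RepHom (Xrep K n ε i j) (Xrep K n ε k l) where
  app m := LinearMap.codRestrict (XV K n k l m) (t m • vL K n ε i j m) (by
    intro x
    rw [mem_XV hl]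
    by_cases h : Sp k l m
    · exact Or.inl h
    · right; simp [ht.1 m (fun h' => h h'.2)])
  comm m := by
    ext x
    apply vL_inj (K := K) n ε k l
    by_cases h2 : Sp k l (atgt ε m)
    · show t (atgt ε m) • vL K n ε i j _ ((Xrep K n ε i j).φ m x) = vL K n ε k l _ ((Xrep K n ε k l).φ m _)
      rw [vL_φ hl h2]
      show _ = t (asrc ε m) • vL K n ε i j _ x
      by_cases h1 : Sp i j (asrc ε m)
      · rw [ht.2 m h1 h2]
        by_cases h3 : Sp i j (atgt ε m)
        · rw [vL_φ hj h3]
        · rw [ht.1 _ (fun h => h3 h.1)]; simp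
      · rw [vL_zero hj h1]
        by_cases h3 : Sp i j (atgt ε m)
        · rw [vL_φ hj h3, vL_zero hj h1]; simp
        · rw [vL_zero hj h3]; simp
    · rw [vL_zero hl h2, vL_zero hl h2]

theorem vL_mkHom {n : ℕ} {ε : ℕ → Bool} {i j k l : ℕ} (hj : j ≤ n) (hl : l ≤ n)
    (t : ℕ → K) (ht : HomSc ε i j k l t) (m : ℕ) (x : (Xrep K n ε i j).V m) :
    vL K n ε k l m ((mkHom hj hl t ht).app m x) = t m * vL K n ε i j m x := rfl

theorem extZero_of {n : ℕ} {ε : ℕ → Bool} {i j k l : ℕ} (hj : j ≤ n) (hl : l ≤ n)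
    (H : ∀ c : ℕ → K, ∃ t : ℕ → K, (∀ m, ¬ (Sp i j m ∧ Sp k l m) → t m = 0) ∧
      ∀ m, Sp i j (asrc ε m) → Sp k l (atgt ε m) → t (asrc ε m) - t (atgt ε m) = c m) :
    extZero (Xrep K n ε i j) (Xrep K n ε k l) := by
  classical
  rintro ⟨E, f, g, ⟨hf, hg, hfg⟩, hns⟩
  apply hns
  let u : ∀ m, (Xrep K n ε i j).V m := fun m =>
    el n ε i j m (if Sp i j m then 1 else 0) ((mem_XV hj _).2 (by split_ifs <;> tauto))
  have hu : ∀ m, vL K n ε i j m (u m) = if Sp i j m then 1 else 0 := fun m => vL_el ..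
  have hu0 : ∀ m, ¬ Sp i j m → u m = 0 := by
    intro m h; apply vL_inj; rw [hu]; simp [h]
  have hφu : ∀ m, Sp i j (asrc ε m) → (Xrep K n ε i j).φ m (u (asrc ε m)) = u (atgt ε m) := by
    intro m h1
    apply vL_inj
    by_cases h3 : Sp i j (atgt ε m)
    · rw [vL_φ hj h3, hu, hu]; simp [h1, h3]
    · rw [vL_zero hj h3, vL_zero hj h3]
  have hx : ∀ m (x : (Xrep K n ε i j).V m), x = (vL K n ε i j m x) • u m := by
    intro m x
    apply vL_inj
    rw [map_smul, hu]
    split_ifs with h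
    · simp
    · simp [vL_zero hj h]
  have he : ∀ m, ∃ e : E.V m, g.app m e = u m ∧ (¬ Sp i j m → e = 0) := by
    intro m
    by_cases h : Sp i j m
    · obtain ⟨e, he⟩ := hg m (u m)
      exact ⟨e, he, fun h' => absurd h h'⟩
    · exact ⟨0, by simp [hu0 m h], fun _ => rfl⟩
  choose e he he0 using he
  have hgf : ∀ m b, g.app m (f.app m b) = 0 := by
    intro m b
    have : f.app m b ∈ LinearMap.ker (g.app m) := by
      rw [← hfg m]; exact ⟨b, rfl⟩
    exact this
  have hc : ∀ m, ∃ c : (Xrep K n ε k l).V (atgt ε m), Sp i j (asrc ε m) →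
      f.app _ c = E.φ m (e (asrc ε m)) - e (atgt ε m) := by
    intro m
    by_cases h : Sp i j (asrc ε m)
    · have : E.φ m (e (asrc ε m)) - e (atgt ε m) ∈ LinearMap.range (f.app (atgt ε m)) := by
        rw [hfg, LinearMap.mem_ker, map_sub, he]
        have := LinearMap.congr_fun (g.comm m) (e (asrc ε m))
        simp only [LinearMap.comp_apply] at this
        rw [this, he, hφu m h, sub_self]
      obtain ⟨c, hc⟩ := this
      exact ⟨c, fun _ => hc⟩
    · exact ⟨0, fun h' => absurd h' h⟩
  choose c hc using hc
  obtain ⟨t, ht0, ht⟩ := H (fun m => - vL K n ε k l _ (c m))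
  let b : ∀ m, (Xrep K n ε k l).V m := fun m => el n ε k l m (t m) (by
    rw [mem_XV hl]
    by_cases h : Sp k l m
    · exact Or.inl h
    · exact Or.inr (ht0 m fun h' => h h'.2))
  have hb : ∀ m, vL K n ε k l m (b m) = t m := fun m => vL_el ..
  let e' : ∀ m, E.V m := fun m => e m + f.app m (b m)
  have he' : ∀ m, g.app m (e' m) = u m := by
    intro m; simp only [e', map_add, he, hgf, add_zero]
  have he'0 : ∀ m, ¬ Sp i j m → e' m = 0 := by
    intro m h
    have : b m = 0 := by
      apply vL_inj; rw [hb, ht0 m (fun h' => h h'.1), map_zero]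
    simp only [e', he0 m h, this, map_zero, add_zero]
  have hE : ∀ m, Sp i j (asrc ε m) → E.φ m (e' (asrc ε m)) = e' (atgt ε m) := by
    intro m h
    have h1 := LinearMap.congr_fun (f.comm m) (b (asrc ε m))
    simp only [LinearMap.comp_apply] at h1
    have h2 : c m + (Xrep K n ε k l).φ m (b (asrc ε m)) = b (atgt ε m) := by
      apply vL_inj
      by_cases h3 : Sp k l (atgt ε m)
      · rw [map_add, vL_φ hl h3, hb, hb]
        have := ht m h h3
        linear_combination this
      · rw [vL_zero hl h3, vL_zero hl h3]
    simp only [e', map_add]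
    rw [← h1, ← h2, map_add, hc m h]
    abel
  refine ⟨⟨fun m => (vL K n ε i j m).smulRight (e' m), ?_⟩, ?_⟩
  · intro m
    ext x
    simp only [LinearMap.comp_apply, LinearMap.smulRight_apply, map_smul]
    by_cases h1 : Sp i j (asrc ε m)
    · rw [hE m h1]
      by_cases h3 : Sp i j (atgt ε m)
      · rw [vL_φ hj h3]
      · rw [he'0 _ h3]; simp
    · rw [vL_zero hj h1, zero_smul]
      by_cases h3 : Sp i j (atgt ε m)
      · rw [vL_φ hj h3, vL_zero hj h1, zero_smul]
      · rw [he'0 _ h3]; simp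
  · intro m
    ext x
    simp only [LinearMap.comp_apply, LinearMap.smulRight_apply, map_smul, LinearMap.id_apply]
    rw [he', ← hx]

/-- left relevance -/
def Lr (ε : ℕ → Bool) (i k : ℕ) : Prop := (i < k ∧ ε k = true) ∨ (k < i ∧ ε i = false)
/-- right relevance -/
def Rr (ε : ℕ → Bool) (j l : ℕ) : Prop := (l < j ∧ ε l = false) ∨ (j < l ∧ ε j = true)

theorem rel_iff (ε : ℕ → Bool) (i j k l m : ℕ) (h : max i k < min j l) :
    (Sp i j (asrc ε m) ∧ Sp k l (atgt ε m)) ↔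
    ((max i k < m ∧ m < min j l) ∨ (m = max i k ∧ Lr ε i k) ∨ (m = min j l ∧ Rr ε j l)) := by
  unfold Sp asrc atgt Lr Rr
  rcases lt_trichotomy i k with h1 | h1 | h1 <;> rcases lt_trichotomy j l with h2 | h2 | h2 <;>
  cases hm : ε m <;> simp only [Bool.false_eq_true, if_false, if_true] <;> 
  constructor <;> intro H <;> grind

theorem sc_zero (ε : ℕ → Bool) (i j k l : ℕ) 
    (hLR : max i k < min j l → Lr ε i k ∨ Rr ε j l) (t : ℕ → K) (ht : HomSc ε i j k l t) :
    ∀ m, t m = 0 := by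
  by_cases h : max i k < min j l
  swap
  · intro m; apply ht.1; unfold Sp; omega
  have step : ∀ m, ((max i k < m ∧ m < min j l) ∨ (m = max i k ∧ Lr ε i k) ∨
      (m = min j l ∧ Rr ε j l)) → t m = t (m+1) := by
    intro m hm
    have h1 := (rel_iff ε i j k l m h).2 hm
    have h2 := ht.2 m h1.1 h1.2
    unfold asrc atgt at h2
    cases hm : ε m <;> simp only [hm, Bool.false_eq_true, if_false, if_true] at h2
    · exact h2.symm
    · exact h2
  have out : ∀ m, (m ≤ max i k ∨ min j l < m) → t m = 0 := by
    intro m hm; apply ht.1; unfold Sp; omega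
  rcases hLR h with hL | hR
  · have : ∀ m, m ≤ min j l → t m = 0 := by
      intro m
      induction m with
      | zero => intro _; apply out; omega
      | succ m ih =>
        intro hm
        by_cases h3 : m < max i k
        · apply out; omega
        · rw [← step m (by grind)]; exact ih (by omega)
    intro m
    by_cases h4 : m ≤ min j l
    · exact this m h4
    · apply out; omega
  · have : ∀ r m, m + r = min j l + 1 → t m = 0 := by
      intro r
      induction r with
      | zero => intro m _; apply out; omega
      | succ r ih =>
        intro m hm
        by_cases h3 : m ≤ max i k
        · apply out; omega
        · rw [step m (by grind)]; exact ih _ (by omega)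
    intro m
    by_cases h4 : m ≤ min j l
    · exact this (min j l + 1 - m) m (by omega)
    · apply out; omega

theorem sc_ext (ε : ℕ → Bool) (i j k l : ℕ) (hij : i < j) (hkl : k < l)
    (h1 : max i k < min j l → ¬ (Lr ε i k ∧ Rr ε j l))
    (h2 : ¬ (j = k ∧ ε j = true)) (h3 : ¬ (l = i ∧ ε i = false)) (c : ℕ → K) :
    ∃ t : ℕ → K, (∀ m, ¬ (Sp i j m ∧ Sp k l m) → t m = 0) ∧
      ∀ m, Sp i j (asrc ε m) → Sp k l (atgt ε m) → t (asrc ε m) - t (atgt ε m) = c m := by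
  by_cases h : max i k < min j l
  swap
  · refine ⟨fun _ => 0, fun _ _ => rfl, ?_⟩
    intro m ha hb
    exfalso
    unfold Sp asrc atgt at *
    cases hm : ε m <;> simp only [hm, Bool.false_eq_true, if_false, if_true] at ha hb
    · have : m = l ∧ l = i := by omega
      grind
    · have : m = k ∧ j = k := by omega
      grind
  · let c' : ℕ → K := fun m => if ε m then c m else - c m
    suffices hs : ∃ t : ℕ → K, (∀ m, ¬ (max i k < m ∧ m ≤ min j l) → t m = 0) ∧
      ∀ m, ((max i k < m ∧ m < min j l) ∨ (m = max i k ∧ Lr ε i k) ∨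
      (m = min j l ∧ Rr ε j l)) → t m - t (m+1) = c' m by
      obtain ⟨t, ht0, ht⟩ := hs
      refine ⟨t, fun m hm => ht0 m (by unfold Sp at hm; omega), fun m ha hb => ?_⟩
      have := ht m ((rel_iff ε i j k l m h).1 ⟨ha, hb⟩)
      simp only [c'] at this
      unfold asrc atgt
      cases hm : ε m <;> simp only [hm, Bool.false_eq_true, if_false, if_true] at this ⊢
      · linear_combination -this
      · exact this
    by_cases hL : Lr ε i k
    · have hR : ¬ Rr ε j l := fun hR => h1 h ⟨hL, hR⟩
      refine ⟨fun m => if max i k < m ∧ m ≤ min j l then 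
        - ∑ r ∈ Finset.Ico (max i k) m, c' r else 0, fun m hm => if_neg hm, fun m hm => ?_⟩
      have hm' : max i k ≤ m ∧ m < min j l := by grind
      have e1 : (if max i k < m ∧ m ≤ min j l then 
        - ∑ r ∈ Finset.Ico (max i k) m, c' r else 0) = - ∑ r ∈ Finset.Ico (max i k) m, c' r := by
        split_ifs with h5
        · rfl
        · have : m = max i k := by omega
          rw [this]; simp
      simp only [e1]
      rw [if_pos (by omega), Finset.sum_Ico_succ_top hm'.1]
      ring
    · refine ⟨fun m => if max i k < m ∧ m ≤ min j l then 
        ∑ r ∈ Finset.Ico m (min j l + 1), c' r else 0, fun m hm => if_neg hm, fun m hm => ?_⟩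
      have hm' : max i k < m ∧ m ≤ min j l := by grind
      have e1 : (if max i k < m + 1 ∧ m + 1 ≤ min j l then 
        ∑ r ∈ Finset.Ico (m+1) (min j l + 1), c' r else 0) 
          = ∑ r ∈ Finset.Ico (m+1) (min j l + 1), c' r := by
        split_ifs with h5
        · rfl
        · have : m = min j l := by omega
          rw [this]; simp
      simp only [e1]
      rw [if_pos hm', Finset.sum_eq_sum_Ico_succ_bot (by omega)]
      ring

theorem excPair_of {n : ℕ} {ε : ℕ → Bool} {i j k l : ℕ} (hj : j ≤ n) (hl : l ≤ n)
    (hij : i < j) (hkl : k < l)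
    (h1 : max i k < min j l → (Lr ε i k ∨ Rr ε j l) ∧ ¬ (Lr ε i k ∧ Rr ε j l))
    (h2 : ¬ (j = k ∧ ε j = true)) (h3 : ¬ (l = i ∧ ε i = false)) :
    ExcPair (Xrep K n ε k l) (Xrep K n ε i j) :=
  ⟨homZero_of hj hl (sc_zero ε i j k l fun h => (h1 h).1),
   extZero_of hj hl (sc_ext ε i j k l hij hkl (fun h => (h1 h).2) h2 h3)⟩

open Classical in
/-- indicator of the overlap -/
noncomputable def ind (K : Type) [Field K] (i j k l : ℕ) (m : ℕ) : K :=
  if Sp i j m ∧ Sp k l m then 1 else 0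

theorem ind_sc {ε : ℕ → Bool} {i j k l : ℕ} (h : max i k < min j l)
    (hL : ¬ Lr ε i k) (hR : ¬ Rr ε j l) : HomSc ε i j k l (ind K i j k l) := by
  refine ⟨fun m hm => if_neg hm, fun m ha hb => ?_⟩
  have := (rel_iff ε i j k l m h).1 ⟨ha, hb⟩
  have hm : max i k < m ∧ m < min j l := by grind
  unfold ind
  rw [if_pos, if_pos]
  · unfold Sp atgt; split_ifs <;> omega
  · unfold Sp asrc; split_ifs <;> omega

theorem not_homZero {n : ℕ} {ε : ℕ → Bool} {i j k l : ℕ} (hj : j ≤ n) (hl : l ≤ n)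
    (h : max i k < min j l) (hL : ¬ Lr ε i k) (hR : ¬ Rr ε j l) :
    ¬ homZero (Xrep K n ε i j) (Xrep K n ε k l) := by
  intro H
  have hs : Sp i j (min j l) ∧ Sp k l (min j l) := by unfold Sp; omega
  have h0 := H (mkHom hj hl _ (ind_sc h hL hR)) (min j l)
  have h1 := vL_mkHom hj hl _ (ind_sc (K := K) h hL hR) (min j l)
    (el n ε i j _ 1 ((mem_XV hj _).2 (Or.inl hs.1)))
  rw [h0, vL_el] at h1
  unfold ind at h1
  rw [if_pos hs] at h1
  simp at h1

/-- A = (i,j], B = (k,l], E = (p,q] their union -/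
theorem extNonzero_of {n : ℕ} {ε : ℕ → Bool} {i j k l p q : ℕ} (hj : j ≤ n) (hl : l ≤ n)
    (hij : i < j) (hkl : k < l)
    (hpq : (j = k ∧ ε j = true ∧ p = i ∧ q = l) ∨ (l = i ∧ ε i = false ∧ p = k ∧ q = j)) :
    extNonzero (Xrep K n ε i j) (Xrep K n ε k l) := by
  have hq : q ≤ n := by omega
  have hBE : HomSc ε k l p q (ind K k l p q) := by
    apply ind_sc
    · omega
    · unfold Lr; grind
    · unfold Rr; grind
  have hEA : HomSc ε p q i j (ind K p q i j) := by
    apply ind_sc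
    · omega
    · unfold Lr; grind
    · unfold Rr; grind
  have i1 : ∀ m, Sp k l m → ind K k l p q m = 1 := by
    intro m hm; apply if_pos; unfold Sp at *; omega
  have i2 : ∀ m, Sp i j m → ind K p q i j m = 1 := by
    intro m hm; apply if_pos; unfold Sp at *; omega
  have d1 : ∀ m, Sp k l m → ¬ Sp i j m := by
    intro m; unfold Sp; omega
  have d2 : ∀ m, Sp p q m → ¬ Sp i j m → Sp k l m := by
    intro m; unfold Sp; omega
  have d3 : ∀ m, Sp i j m → Sp p q m := by
    intro m; unfold Sp; omega
  refine ⟨Xrep K n ε p q, mkHom hl hq _ hBE, mkHom hq hj _ hEA, ⟨?_, ?_, ?_⟩, ?_⟩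
  · intro m
    rw [injective_iff_map_eq_zero]
    intro x hx
    have := vL_mkHom hl hq _ hBE m x
    rw [hx, map_zero] at this
    apply vL_inj
    rw [map_zero]
    by_cases h : Sp k l m
    · rw [i1 m h, one_mul] at this; exact this.symm
    · exact vL_zero hl h x
  · intro m y
    by_cases h : Sp i j m
    · refine ⟨el n ε p q m (vL K n ε i j m y) ((mem_XV hq _).2 (Or.inl (d3 m h))), ?_⟩
      apply vL_inj
      rw [vL_mkHom, vL_el, i2 m h, one_mul]
    · refine ⟨0, ?_⟩
      apply vL_inj
      rw [vL_zero hj h, vL_zero hj h]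
  · intro m
    ext y
    rw [LinearMap.mem_range, LinearMap.mem_ker]
    constructor
    · rintro ⟨x, rfl⟩
      apply vL_inj
      by_cases h : Sp k l m
      · rw [vL_zero hj (d1 m h), vL_zero hj (d1 m h)]
      · rw [vL_mkHom, vL_mkHom, vL_zero hl h]; simp
    · intro hy
      have h1 := vL_mkHom hq hj _ hEA m y
      rw [hy, map_zero] at h1
      by_cases h : Sp k l m
      · refine ⟨el n ε k l m (vL K n ε p q m y) ((mem_XV hl _).2 (Or.inl h)), ?_⟩
        apply vL_inj
        rw [vL_mkHom, vL_el, i1 m h, one_mul]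
      · refine ⟨0, ?_⟩
        apply vL_inj
        rw [map_zero, map_zero]
        by_cases h' : Sp i j m
        · rw [i2 m h', one_mul] at h1; exact h1
        · rw [vL_zero hq (fun h'' => h (d2 m h'' h'))]
  · rintro ⟨s, hs⟩
    have hz : homZero (Xrep K n ε i j) (Xrep K n ε p q) := by
      apply homZero_of hj hq
      apply sc_zero
      intro _
      unfold Lr Rr; grind
    have h1 := LinearMap.congr_fun (hs j) (el n ε i j j 1 ((mem_XV hj _).2 (Or.inl ⟨hij, le_rfl⟩)))
    rw [hz s j] at h1
    have h2 := congrArg (vL K n ε i j j) h1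
    simp only [LinearMap.comp_zero, LinearMap.zero_apply, map_zero, LinearMap.id_apply,
      vL_el] at h2
    exact zero_ne_one h2

theorem cw_total (ε : ℕ → Bool) (x y : ℕ × ℕ) (hx : x.1 < x.2) (hy : y.1 < y.2) (hne : x ≠ y)
    (hs : SharesEndpoint x y) : Cw ε x y ∨ Cw ε y x := by
  obtain ⟨i, j⟩ := x
  obtain ⟨k, l⟩ := y
  have : ¬ (i = k ∧ j = l) := by rintro ⟨rfl, rfl⟩; exact hne rfl
  unfold Cw
  unfold SharesEndpoint at hs
  simp only at *
  rcases hs with h | h | h | h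
  · subst h
    rcases lt_trichotomy j l with h | h | h
    · cases hh : ε j
      · exact Or.inl (Or.inr (Or.inr (Or.inl ⟨rfl, Or.inl ⟨h, rfl⟩⟩)))
      · exact Or.inr (Or.inr (Or.inr (Or.inl ⟨rfl, Or.inr ⟨h, rfl⟩⟩)))
    · exact absurd ⟨rfl, h⟩ this
    · cases hh : ε l
      · exact Or.inr (Or.inr (Or.inr (Or.inl ⟨rfl, Or.inl ⟨h, rfl⟩⟩)))
      · exact Or.inl (Or.inr (Or.inr (Or.inl ⟨rfl, Or.inr ⟨h, rfl⟩⟩)))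
  · subst h
    cases hh : ε i
    · exact Or.inl (Or.inr (Or.inl ⟨rfl, rfl⟩))
    · exact Or.inr (Or.inl ⟨rfl, rfl⟩)
  · subst h
    cases hh : ε j
    · exact Or.inr (Or.inr (Or.inl ⟨rfl, rfl⟩))
    · exact Or.inl (Or.inl ⟨rfl, rfl⟩)
  · subst h
    rcases lt_trichotomy i k with h | h | h
    · cases hh : ε k
      · exact Or.inl (Or.inr (Or.inr (Or.inr ⟨rfl, Or.inl ⟨h, rfl⟩⟩)))
      · exact Or.inr (Or.inr (Or.inr (Or.inr ⟨rfl, Or.inr ⟨h, rfl⟩⟩)))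
    · exact absurd ⟨h, rfl⟩ this
    · cases hh : ε i
      · exact Or.inr (Or.inr (Or.inr (Or.inr ⟨rfl, Or.inl ⟨h, rfl⟩⟩)))
      · exact Or.inl (Or.inr (Or.inr (Or.inr ⟨rfl, Or.inr ⟨h, rfl⟩⟩)))

theorem exc_of_cw {n : ℕ} {ε : ℕ → Bool} (x y : ℕ × ℕ) (hx : x.1 < x.2 ∧ x.2 ≤ n)
    (hy : y.1 < y.2 ∧ y.2 ≤ n) (h : Cw ε y x) :
    ExcPair (Xrep K n ε y.1 y.2) (Xrep K n ε x.1 x.2) := by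
  obtain ⟨i, j⟩ := x
  obtain ⟨k, l⟩ := y
  unfold Cw at h
  simp only at *
  apply excPair_of hx.2 hy.2 hx.1 hy.1
  · unfold Lr Rr
    rcases h with h | h | h | h <;> grind
  · grind
  · grind

theorem exc_of_disj {n : ℕ} {ε : ℕ → Bool} (x y : ℕ × ℕ) (hx : x.1 < x.2 ∧ x.2 ≤ n)
    (hy : y.1 < y.2 ∧ y.2 ≤ n) (h : ¬ SharesEndpoint x y) (hc : ¬ Crosses ε x y) :
    ExcPair (Xrep K n ε y.1 y.2) (Xrep K n ε x.1 x.2) := by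
  obtain ⟨i, j⟩ := x
  obtain ⟨k, l⟩ := y
  unfold SharesEndpoint at h
  unfold Crosses at hc
  simp only at *
  apply excPair_of hx.2 hy.2 hx.1 hy.1
  · intro hm
    unfold Lr Rr
    have h1 : i ≠ k := fun h' => h (Or.inl h')
    have h2 : j ≠ l := fun h' => h (Or.inr (Or.inr (Or.inr h')))
    rcases lt_or_gt_of_ne h1 with h1 | h1 <;> rcases lt_or_gt_of_ne h2 with h2 | h2 <;>
      simp only [h1, h2, not_lt_of_gt h1, not_lt_of_gt h2, true_and, false_and, or_false,
        false_or, hx.1, hy.1] at hc ⊢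
    · have h3 : k < j := by omega
      cases e2 : ε j <;> cases e3 : ε k <;> simp [e2, e3, h3] at hc ⊢
    · cases e2 : ε l <;> cases e3 : ε k <;> simp [e2, e3] at hc ⊢
    · cases e2 : ε i <;> cases e3 : ε j <;> simp [e2, e3] at hc ⊢
    · have h3 : i < l := by omega
      cases e2 : ε i <;> cases e3 : ε l <;> simp [e2, e3, h3] at hc ⊢
  · exact fun h' => h (Or.inr (Or.inr (Or.inl h'.1)))
  · exact fun h' => h (Or.inr (Or.inl h'.1.symm))

theorem not_exc_of_cw {n : ℕ} {ε : ℕ → Bool} (x y : ℕ × ℕ) (hx : x.1 < x.2 ∧ x.2 ≤ n)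
    (hy : y.1 < y.2 ∧ y.2 ≤ n) (h : Cw ε y x) :
    ¬ ExcPair (Xrep K n ε x.1 x.2) (Xrep K n ε y.1 y.2) := by
  obtain ⟨k, l⟩ := x
  obtain ⟨i, j⟩ := y
  unfold Cw at h
  simp only at *
  rintro ⟨h1, h2⟩
  rcases h with h | h | h | h
  · exact h2 (extNonzero_of (p := i) (q := l) hy.2 hx.2 hy.1 hx.1 (by grind))
  · exact h2 (extNonzero_of (p := k) (q := j) hy.2 hx.2 hy.1 hx.1 (by grind))
  all_goals
    refine not_homZero hy.2 hx.2 (by omega) ?_ ?_ h1 <;> simp only [Lr, Rr] <;> grind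

/-- Theorem 5.9: for a strand diagram `d` with `n` strands and its complete exceptional
collection `ξ̄`, reversal `c ↦ c ∘ Fin.rev` is a bijection from the complete exceptional
sequences formed from the representations of `ξ̄` onto the linear extensions of `P_d`
(a linear extension `f : P_d → {1,…,n}` being recorded by its inverse enumeration
`g : Fin n → d`, `g ℓ = f⁻¹(ℓ+1)`; the sequence `(V_1,…,V_n)` maps to `f(chord of V_ℓ) = n+1−ℓ`). -/
theorem ces_biject_with_linear_extensions (K : Type) [Field K] (n : ℕ) (hn : 1 ≤ n)
    (ε : ℕ → Bool) (d : Finset (ℕ × ℕ)) (hcard : d.card = n) (hd : IsDiagram n ε d) :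
    Set.BijOn (fun (c : Fin n → ℕ × ℕ) => c ∘ Fin.rev)
      {c : Fin n → ℕ × ℕ | (∀ a, c a ∈ d) ∧ Function.Injective c ∧ IsExcSeq K n ε c}
      {g : Fin n → ℕ × ℕ | (∀ a, g a ∈ d) ∧ Function.Injective g ∧
        ∀ a b : Fin n, leD ε d (g a) (g b) → a ≤ b} := by
  have surj : ∀ g : Fin n → ℕ × ℕ, (∀ a, g a ∈ d) → Function.Injective g →
      ∀ x ∈ d, ∃ a, g a = x := by
    intro g hg hi x hx
    have : Finset.univ.image g = d := by
      apply Finset.eq_of_subset_of_card_le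
      · intro y hy
        obtain ⟨a, _, rfl⟩ := Finset.mem_image.1 hy
        exact hg a
      · rw [Finset.card_image_of_injective _ hi]; simp [hcard]
    rw [← this] at hx
    obtain ⟨a, _, h⟩ := Finset.mem_image.1 hx
    exact ⟨a, h⟩
  obtain ⟨hv, hnc, -⟩ := hd
  refine ⟨?_, ?_, ?_⟩
  · rintro c ⟨hc, hi, he⟩
    have hi' : Function.Injective (c ∘ Fin.rev) := hi.comp Fin.rev_injective
    refine ⟨fun a => hc _, hi', ?_⟩
    have main : ∀ x y, leD ε d x y → ∀ a b : Fin n, (c ∘ Fin.rev) a = x →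
        (c ∘ Fin.rev) b = y → a ≤ b := by
      intro x y h
      induction h with
      | refl => intro a b ha hb; exact (hi' (ha.trans hb.symm)).le
      | tail h1 h2 ih =>
        rename_i y z
        intro a b ha hb
        obtain ⟨hy, hz, -, hcw⟩ := h2
        obtain ⟨a', ha'⟩ := surj _ (fun a => hc (Fin.rev a)) hi' y hy
        refine (ih a a' ha ha').trans ?_
        by_contra hlt
        rw [not_le] at hlt
        have := he (Fin.rev a') (Fin.rev b) (Fin.rev_lt_rev.2 hlt)
        simp only [Function.comp_apply] at ha' hb
        rw [ha', hb] at this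
        exact not_exc_of_cw y z (hv y hy) (hv z hz) hcw this
    intro a b h
    exact main _ _ h a b rfl rfl
  · intro c _ c' _ h
    funext a
    have := congrFun h (Fin.rev a)
    simpa using this
  · rintro g ⟨hg, hi, hl⟩
    refine ⟨g ∘ Fin.rev, ⟨fun a => hg _, hi.comp Fin.rev_injective, ?_⟩, ?_⟩
    · intro a b hab
      simp only [Function.comp_apply]
      have hlt : Fin.rev b < Fin.rev a := Fin.rev_lt_rev.2 hab
      have hx := hg (Fin.rev b)
      have hy := hg (Fin.rev a)
      have hne : g (Fin.rev b) ≠ g (Fin.rev a) := fun h => hlt.ne (hi h)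
      by_cases hs : SharesEndpoint (g (Fin.rev b)) (g (Fin.rev a))
      · rcases cw_total ε _ _ (hv _ hx).1 (hv _ hy).1 hne hs with h | h
        · exfalso
          refine absurd (hl (Fin.rev a) (Fin.rev b) (Relation.ReflTransGen.single
            ⟨hy, hx, ?_, h⟩)) (not_le.2 hlt)
          unfold SharesEndpoint at *
          grind
        · exact exc_of_cw _ _ (hv _ hx) (hv _ hy) h
      · exact exc_of_disj _ _ (hv _ hx) (hv _ hy) hs (hnc _ hx _ hy)
    · funext a
      simp

end ESPaper
end

section
/- Let n ≥ 1 and ε = (−,…,−). Then (n+1)^{n−1} equals the sum, over all noncrossing spanning trees d on {0,…,n}, of the number of linear extensions of the poset P_d. -/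
namespace ESPaper

/-- The number of linear extensions of the poset `P_d`, recorded as the number of
enumerations `g : Fin d.card → d` (the inverse of a linear extension) that are
order-preserving from `P_d`. -/
noncomputable def linExtCount (ε : ℕ → Bool) (d : Finset (ℕ × ℕ)) : ℕ :=
  Set.ncard {g : Fin d.card → ℕ × ℕ | (∀ a, g a ∈ d) ∧ Function.Injective g ∧
    ∀ a b : Fin d.card, leD ε d (g a) (g b) → a ≤ b}

structure WW {n : ℕ} (L : Finset (Fin n)) (g : Fin n → ℕ × ℕ) : Prop where
  lt : ∀ a ∈ L, (g a).1 < (g a).2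
  nc : ∀ a ∈ L, ∀ b ∈ L, ¬ ((g a).1 < (g b).1 ∧ (g b).1 < (g a).2 ∧ (g a).2 < (g b).2)
  inj : ∀ a ∈ L, ∀ b ∈ L, (g a).1 = (g b).1 → (g a).2 = (g b).2 → a = b
  gap : ∀ a ∈ L, ∃ x, ((g a).1 ≤ x ∧ x < (g a).2 ∧
      ∀ b ∈ L, b ≠ a → (g a).1 ≤ (g b).1 → (g b).2 ≤ (g a).2 → ¬ ((g b).1 ≤ x ∧ x < (g b).2)) ∧
    ∀ y, (g a).1 ≤ y → y < (g a).2 → y ≠ x →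
      ∃ b ∈ L, b ≠ a ∧ (g a).1 ≤ (g b).1 ∧ (g b).2 ≤ (g a).2 ∧ (g b).1 ≤ y ∧ y < (g b).2

structure VV {n : ℕ} (t : ℕ) (L : Finset (Fin n)) (g : Fin n → ℕ × ℕ) : Prop extends WW L g where
  off : ∀ a, a ∉ L → g a = (0, 0)
  le : ∀ a ∈ L, (g a).2 ≤ t
  o1 : ∀ a ∈ L, ∀ b ∈ L, (g a).2 = (g b).1 → a < b
  o2 : ∀ a ∈ L, ∀ b ∈ L, (g a).1 = (g b).1 → (g b).2 < (g a).2 → a < b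
  o3 : ∀ a ∈ L, ∀ b ∈ L, (g a).2 = (g b).2 → (g b).1 < (g a).1 → a < b

def Cov {n : ℕ} (L : Finset (Fin n)) (g : Fin n → ℕ × ℕ) (x : ℕ) : Prop :=
  ∃ b ∈ L, (g b).1 ≤ x ∧ x < (g b).2

def Outer {n : ℕ} (L : Finset (Fin n)) (g : Fin n → ℕ × ℕ) (l : Fin n) : Prop :=
  ∀ a ∈ L, (g a).1 ≤ (g l).1 → (g l).2 ≤ (g a).2 → a = l

theorem WW.congr {n : ℕ} {L : Finset (Fin n)} {g g' : Fin n → ℕ × ℕ} (h : WW L g)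
    (e : ∀ a ∈ L, g a = g' a) : WW L g' := by
  obtain ⟨h1, h2, h3, h4⟩ := h
  refine ⟨?_, ?_, ?_, ?_⟩
  · intro a ha; rw [← e a ha]; exact h1 a ha
  · intro a ha b hb; rw [← e a ha, ← e b hb]; exact h2 a ha b hb
  · intro a ha b hb; rw [← e a ha, ← e b hb]; exact h3 a ha b hb
  · intro a ha
    obtain ⟨x, ⟨hx1, hx2, hx3⟩, hx4⟩ := h4 a ha
    rw [← e a ha]
    refine ⟨x, ⟨hx1, hx2, ?_⟩, ?_⟩
    · intro b hb; rw [← e b hb]; exact hx3 b hb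
    · intro y hy1 hy2 hy3
      obtain ⟨b, hb, hb'⟩ := hx4 y hy1 hy2 hy3
      refine ⟨b, hb, ?_⟩
      rw [← e b hb]; exact hb'

theorem WW.erase {n : ℕ} {L : Finset (Fin n)} {g : Fin n → ℕ × ℕ} (h : WW L g)
    {l : Fin n} (ho : Outer L g l) : WW (L.erase l) g := by
  refine ⟨?_, ?_, ?_, ?_⟩
  · intro a ha; exact h.lt a (Finset.mem_of_mem_erase ha)
  · intro a ha b hb; exact h.nc a (Finset.mem_of_mem_erase ha) b (Finset.mem_of_mem_erase hb)
  · intro a ha b hb; exact h.inj a (Finset.mem_of_mem_erase ha) b (Finset.mem_of_mem_erase hb)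
  · intro a ha
    obtain ⟨hal, haL⟩ := Finset.mem_erase.mp ha
    obtain ⟨x, ⟨hx1, hx2, hx3⟩, hx4⟩ := h.gap a haL
    refine ⟨x, ⟨hx1, hx2, ?_⟩, ?_⟩
    · intro b hb; exact hx3 b (Finset.mem_of_mem_erase hb)
    · intro y hy1 hy2 hy3
      obtain ⟨b, hb, hb1, hb2, hb3, hb4⟩ := hx4 y hy1 hy2 hy3
      refine ⟨b, Finset.mem_erase.mpr ⟨?_, hb⟩, hb1, hb2, hb3, hb4⟩
      rintro rfl
      exact hal (ho a haL hb2 hb3)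

/-- the outer chord adds exactly one gap -/
theorem WW.newgap {n : ℕ} {L : Finset (Fin n)} {g : Fin n → ℕ × ℕ} (h : WW L g)
    {l : Fin n} (hl : l ∈ L) (ho : Outer L g l) :
    ∃ x, (g l).1 ≤ x ∧ x < (g l).2 ∧ ¬ Cov (L.erase l) g x ∧
      ∀ y, (g l).1 ≤ y → y < (g l).2 → y ≠ x → Cov (L.erase l) g y := by
  obtain ⟨x, ⟨hx1, hx2, hx3⟩, hx4⟩ := h.gap l hl
  refine ⟨x, hx1, hx2, ?_, ?_⟩
  · rintro ⟨b, hb, hb1, hb2⟩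
    obtain ⟨hbl, hb⟩ := Finset.mem_erase.mp hb
    have h1 := h.nc b hb l hl
    have h2 := h.nc l hl b hb
    have h3 := ho b hb
    have h4 := hx3 b hb hbl
    by_cases c1 : (g b).1 < (g l).1
    · have : (g b).2 < (g l).2 := by
        by_contra hh
        exact hbl (h3 (by omega) (by omega))
      exact h1 (by omega)
    · by_cases c2 : (g b).2 ≤ (g l).2
      · exact h4 (by omega) c2 ⟨hb1, hb2⟩
      · have : (g l).1 < (g b).1 := by
          by_contra hh
          exact hbl (h3 (by omega) (by omega))
        exact h2 (by omega)
  · intro y hy1 hy2 hy3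
    obtain ⟨b, hb, hb1, hb2, hb3, hb4⟩ := hx4 y hy1 hy2 hy3
    exact ⟨b, Finset.mem_erase.mpr ⟨hb1, hb⟩, hb4⟩

theorem WW.exists_outer {n : ℕ} {L : Finset (Fin n)} {g : Fin n → ℕ × ℕ} (h : WW L g)
    (hL : L.Nonempty) : ∃ l ∈ L, Outer L g l := by
  obtain ⟨l, hl, hm⟩ := Finset.exists_max_image L (fun a => (g a).2 - (g a).1) hL
  refine ⟨l, hl, fun a ha h1 h2 => ?_⟩
  have := hm a ha
  have := h.lt a ha
  have := h.lt l hl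
  exact h.inj a ha l hl (by omega) (by omega)

theorem WW.induct {n : ℕ} {g : Fin n → ℕ × ℕ} (p : Finset (Fin n) → Prop) (h0 : p ∅)
    (hs : ∀ L l, l ∈ L → WW L g → Outer L g l → p (L.erase l) → p L) (L : Finset (Fin n))
    (h : WW L g) : p L := by
  induction hk : L.card generalizing L with
  | zero => rw [Finset.card_eq_zero] at hk; rw [hk]; exact h0
  | succ k ih =>
    obtain ⟨l, hl, ho⟩ := h.exists_outer (Finset.card_pos.mp (by omega))
    exact hs L l hl h ho (ih _ (h.erase ho) (by rw [Finset.card_erase_of_mem hl]; omega))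

open Classical in
theorem WW.card {n : ℕ} {L : Finset (Fin n)} {g : Fin n → ℕ × ℕ} (h : WW L g) (t : ℕ)
    (ht : ∀ a ∈ L, (g a).2 ≤ t) :
    ((Finset.range t).filter (fun x => Cov L g x)).card = L.card := by
  revert ht
  refine WW.induct (g := g) (fun L => (∀ a ∈ L, (g a).2 ≤ t) →
    ((Finset.range t).filter (fun x => Cov L g x)).card = L.card) ?_ ?_ L h
  · intro _
    simp [Cov]
  · intro L l hl h ho ih ht
    have ih := ih (fun a ha => ht a (Finset.mem_of_mem_erase ha))
    obtain ⟨x, hx1, hx2, hx3, hx4⟩ := h.newgap hl ho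
    have : (Finset.range t).filter (fun x => Cov L g x) =
        insert x ((Finset.range t).filter (fun x => Cov (L.erase l) g x)) := by
      ext y
      simp only [Finset.mem_filter, Finset.mem_range, Finset.mem_insert]
      constructor
      · rintro ⟨hy, b, hb, hb1, hb2⟩
        by_cases e : y = x
        · exact Or.inl e
        · refine Or.inr ⟨hy, ?_⟩
          by_cases e2 : b = l
          · subst e2; exact hx4 y hb1 hb2 e
          · exact ⟨b, Finset.mem_erase.mpr ⟨e2, hb⟩, hb1, hb2⟩
      · rintro (rfl | ⟨hy, b, hb, hb1, hb2⟩)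
        · exact ⟨by have := ht l hl; omega, l, hl, hx1, hx2⟩
        · exact ⟨hy, b, Finset.mem_of_mem_erase hb, hb1, hb2⟩
    rw [this, Finset.card_insert_of_notMem (by simp [hx3]), ih, Finset.card_erase_of_mem hl]
    have := Finset.card_pos.mpr ⟨l, hl⟩
    omega

theorem VV.outer {n t : ℕ} {L : Finset (Fin n)} {g : Fin n → ℕ × ℕ} (h : VV t L g)
    {l : Fin n} (hl : l ∈ L) (hlt : (g l).2 = t) (hm : ∀ a ∈ L, (g a).2 = t → a ≤ l) :
    Outer L g l := by
  intro a ha h1 h2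
  have h3 := h.le a ha
  have h4 := hm a ha (by omega)
  by_contra hne
  have h5 : (g a).1 < (g l).1 := by
    by_contra hh
    exact hne (h.inj a ha l hl (by omega) (by omega))
  have := h.o3 l hl a ha (by omega) h5
  exact absurd this (not_lt.mpr h4)

theorem VV.remove {n t : ℕ} {L : Finset (Fin n)} {g : Fin n → ℕ × ℕ} (h : VV t L g)
    {l : Fin n} (ho : Outer L g l) :
    VV t (L.erase l) (Function.update g l (0, 0)) := by
  have e : ∀ a ∈ L.erase l, g a = Function.update g l (0, 0) a := by
    intro a ha
    rw [Function.update_of_ne (Finset.ne_of_mem_erase ha)]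
  refine ⟨(h.toWW.erase ho).congr e, ?_, ?_, ?_, ?_, ?_⟩
  · intro a ha
    by_cases hal : a = l
    · subst hal; simp
    · rw [Function.update_of_ne hal]
      exact h.off a (fun hh => ha (Finset.mem_erase.mpr ⟨hal, hh⟩))
  · intro a ha; rw [← e a ha]; exact h.le a (Finset.mem_of_mem_erase ha)
  · intro a ha b hb; rw [← e a ha, ← e b hb]
    exact h.o1 a (Finset.mem_of_mem_erase ha) b (Finset.mem_of_mem_erase hb)
  · intro a ha b hb; rw [← e a ha, ← e b hb]
    exact h.o2 a (Finset.mem_of_mem_erase ha) b (Finset.mem_of_mem_erase hb)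
  · intro a ha b hb; rw [← e a ha, ← e b hb]
    exact h.o3 a (Finset.mem_of_mem_erase ha) b (Finset.mem_of_mem_erase hb)

theorem VV.unique_aux {n t : ℕ} {L : Finset (Fin n)} {g g' : Fin n → ℕ × ℕ}
    (h : VV t L g) (h' : VV t L g') {l : Fin n} (hl : l ∈ L)
    (ht : (g l).2 = t) (ht' : (g' l).2 = t) (ho : Outer L g l) (ho' : Outer L g' l)
    (e : ∀ a, a ≠ l → g a = g' a) : ¬ (g l).1 < (g' l).1 := by
  intro hlt
  obtain ⟨x, hx1, hx2, hx3, hx4⟩ := h.toWW.newgap hl ho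
  obtain ⟨x', hx1', hx2', hx3', hx4'⟩ := h'.toWW.newgap hl ho'
  have hcov : ∀ y, Cov (L.erase l) g' y ↔ Cov (L.erase l) g y := by
    intro y
    constructor
    · rintro ⟨b, hb, hb'⟩
      exact ⟨b, hb, by rw [e b (Finset.ne_of_mem_erase hb)]; exact hb'⟩
    · rintro ⟨b, hb, hb'⟩
      exact ⟨b, hb, by rw [← e b (Finset.ne_of_mem_erase hb)]; exact hb'⟩
  rw [hcov] at hx3'
  have hxx : x' = x := by
    by_contra hne
    exact hx3' (hx4 x' (by omega) (by omega) hne)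
  subst hxx
  -- visibility of (g' l).1
  have vis' : ∀ b ∈ L.erase l, ¬ ((g b).1 < (g' l).1 ∧ (g' l).1 < (g b).2) := by
    rintro b hb ⟨h1, h2⟩
    obtain ⟨hbl, hbL⟩ := Finset.mem_erase.mp hb
    have h3 := h'.nc b hbL l hl
    rw [← e b hbl] at h3
    have h4 := h.le b hbL
    apply hx3
    exact ⟨b, hb, by omega, by omega⟩
  have vis : ∀ b ∈ L.erase l, ¬ ((g b).1 < (g l).1 ∧ (g l).1 < (g b).2) := by
    rintro b hb ⟨h1, h2⟩
    obtain ⟨hbl, hbL⟩ := Finset.mem_erase.mp hb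
    have h3 := h.nc b hbL l hl
    have h4 := h.le b hbL
    apply hx3
    exact ⟨b, hb, by omega, by omega⟩
  have key : ∀ k v, (g' l).1 - v = k → (g l).1 ≤ v → v < (g' l).1 →
      (∀ b ∈ L.erase l, ¬ ((g b).1 < v ∧ v < (g b).2)) →
      (∀ b ∈ L.erase l, (g b).1 = v → l < b) → False := by
    intro k
    induction k using Nat.strong_induction_on with
    | _ k ih =>
      intro v hk hv1 hv2 hvis hlab
      obtain ⟨b0, hb0, hb01, hb02⟩ := hx4 v hv1 (by omega) (by omega)
      have hb0v : (g b0).1 = v := by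
        have := hvis b0 hb0
        omega
      obtain ⟨b, hb, hmax⟩ := Finset.exists_max_image
        ((L.erase l).filter (fun b => (g b).1 = v)) (fun b => (g b).2)
        ⟨b0, Finset.mem_filter.mpr ⟨hb0, hb0v⟩⟩
      obtain ⟨hb, hbv⟩ := Finset.mem_filter.mp hb
      obtain ⟨hbl, hbL⟩ := Finset.mem_erase.mp hb
      have hbg : (g b).1 < (g b).2 := h.lt b hbL
      have hle : (g b).2 ≤ (g' l).1 := by
        have := vis' b hb
        omega
      have hlb := hlab b hb hbv
      rcases Nat.lt_or_ge (g b).2 (g' l).1 with hc | hc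
      · refine ih ((g' l).1 - (g b).2) (by omega) (g b).2 rfl (by omega) hc ?_ ?_
        · rintro c hc' ⟨h1, h2⟩
          obtain ⟨hcl, hcL⟩ := Finset.mem_erase.mp hc'
          have h3 := h.nc b hbL c hcL
          have h4 := hvis c hc'
          have h5 : (g c).1 = v := by omega
          have := hmax c (Finset.mem_filter.mpr ⟨hc', h5⟩)
          omega
        · intro c hc' h1
          obtain ⟨hcl, hcL⟩ := Finset.mem_erase.mp hc'
          exact hlb.trans (h.o1 b hbL c hcL h1.symm)
      · have := h'.o1 b hbL l hl (by rw [← e b hbl]; omega)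
        exact absurd this (not_lt.mpr hlb.le)
  refine key _ (g l).1 rfl le_rfl hlt vis ?_
  intro b hb hb1
  obtain ⟨hbl, hbL⟩ := Finset.mem_erase.mp hb
  refine h.o2 l hl b hbL hb1.symm ?_
  have := h.le b hbL
  have h2 : (g b).2 ≠ (g l).2 := fun hh => hbl (h.inj b hbL l hl hb1 hh)
  omega

theorem VV.exists_ext {n t : ℕ} {L : Finset (Fin n)} {g : Fin n → ℕ × ℕ}
    (h : VV t L g) {l : Fin n} (hl : l ∉ L) (hc : L.card < t)
    (hlab : ∀ a ∈ L, (g a).2 = t → a < l) :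
    ∃ w, VV t (insert l L) (Function.update g l (w, t)) := by
  classical
  -- largest uncovered gap
  have hex : ((Finset.range t).filter (fun x => ¬ Cov L g x)).Nonempty := by
    rw [Finset.nonempty_iff_ne_empty]
    intro hempty
    have h1 := h.toWW.card t h.le
    have h2 := Finset.card_filter_add_card_filter_not (s := Finset.range t) (fun x => Cov L g x)
    rw [hempty, h1] at h2
    simp at h2
    omega
  obtain ⟨x, hx, hmax⟩ := Finset.exists_max_image _ id hex
  simp only [Finset.mem_filter, Finset.mem_range, id] at hx hmax
  obtain ⟨hxt, hxc⟩ := hx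
  have hxc' : ∀ b ∈ L, ¬ ((g b).1 ≤ x ∧ x < (g b).2) := fun b hb hh => hxc ⟨b, hb, hh⟩
  let S : ℕ → Prop := fun v => v ≤ x ∧ (∀ z, v ≤ z → z < x → Cov L g z) ∧
    (∀ b ∈ L, ¬ ((g b).1 < v ∧ v < (g b).2)) ∧ (∀ b ∈ L, (g b).1 = v → l < b)
  have hS : ∃ v, S v := by
    refine ⟨x, le_rfl, fun z h1 h2 => by omega, ?_, ?_⟩
    · intro b hb
      have := hxc' b hb
      omega
    · intro b hb h1
      have := hxc' b hb
      have := h.lt b hb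
      omega
  obtain ⟨hw1, hw2, hw3, hw4⟩ := Nat.find_spec hS
  have hmin := fun v (hv : v < Nat.find hS) => Nat.find_min hS hv
  generalize Nat.find hS = w at hw1 hw2 hw3 hw4 hmin
  have hw5 : ∀ b ∈ L, (g b).2 = w → b < l := by
    intro b0 hb0 hb0w
    by_contra hcon
    have hlb : l < b0 := lt_of_le_of_ne (not_lt.mp hcon) (fun hh => hl (hh ▸ hb0))
    obtain ⟨b, hb, hbm⟩ := Finset.exists_min_image
      (L.filter (fun b => (g b).2 = w)) (fun b => (g b).1)
      ⟨b0, Finset.mem_filter.mpr ⟨hb0, hb0w⟩⟩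
    obtain ⟨hb, hbw⟩ := Finset.mem_filter.mp hb
    have hlb' : l < b := by
      have h1 := hbm b0 (Finset.mem_filter.mpr ⟨hb0, hb0w⟩)
      rcases Nat.lt_or_ge (g b).1 (g b0).1 with h2 | h2
      · exact hlb.trans (h.o3 b0 hb0 b hb (by omega) h2)
      · rw [h.inj b hb b0 hb0 (by omega) (by omega)]; exact hlb
    have hbg := h.lt b hb
    refine hmin (g b).1 (by omega) ⟨by omega, ?_, ?_, ?_⟩
    · intro z hz1 hz2
      rcases Nat.lt_or_ge z w with h1 | h1
      · exact ⟨b, hb, hz1, by omega⟩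
      · exact hw2 z h1 hz2
    · rintro c hc ⟨h1, h2⟩
      have h3 := h.nc c hc b hb
      have h4 := hw3 c hc
      have h5 := hbm c
      simp only [Finset.mem_filter] at h5
      by_cases h6 : (g c).2 = w
      · have := h5 ⟨hc, h6⟩
        omega
      · omega
    · intro c hc h1
      have h4 := hw3 c hc
      rcases Nat.lt_or_ge (g c).2 (g b).2 with h2 | h2
      · exact hlb'.trans (h.o2 b hb c hc h1.symm h2)
      · rw [← h.inj b hb c hc (by omega) (by omega)]; exact hlb'
  refine ⟨w, ?_⟩
  set g' := Function.update g l (w, t) with hg'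
  have el : g' l = (w, t) := by simp [hg']
  have eo : ∀ a ∈ L, g' a = g a := by
    intro a ha
    rw [hg', Function.update_of_ne (by rintro rfl; exact hl ha)]
  have nl : ∀ a ∈ L, a ≠ l := by
    rintro a ha rfl; exact hl ha
  refine ⟨⟨?_, ?_, ?_, ?_⟩, ?_, ?_, ?_, ?_, ?_⟩
  · simp only [Finset.forall_mem_insert, el]
    refine ⟨by omega, fun a ha => ?_⟩
    rw [eo a ha]; exact h.lt a ha
  · simp only [Finset.forall_mem_insert, el]
    refine ⟨⟨by omega, fun b hb => ?_⟩, fun a ha => ⟨?_, fun b hb => ?_⟩⟩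
    · rw [eo b hb]; have := h.le b hb; omega
    · rw [eo a ha]; have := hw3 a ha; omega
    · rw [eo a ha, eo b hb]; exact h.nc a ha b hb
  · simp only [Finset.forall_mem_insert, el]
    refine ⟨⟨by simp, fun b hb => ?_⟩, fun a ha => ⟨?_, fun b hb => ?_⟩⟩
    · rw [eo b hb]; have := hxc' b hb; omega
    · rw [eo a ha]; have := hxc' a ha; omega
    · rw [eo a ha, eo b hb]; exact h.inj a ha b hb
  · simp only [Finset.forall_mem_insert, Finset.exists_mem_insert, el]
    refine ⟨⟨x, ⟨hw1, hxt, by simp, ?_⟩, ?_⟩, ?_⟩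
    · intro b hb _ _ _
      rw [eo b hb]; exact hxc' b hb
    · intro y hy1 hy2 hy3
      right
      rcases Nat.lt_or_ge y x with h1 | h1
      · obtain ⟨b, hb, hb1, hb2⟩ := hw2 y hy1 h1
        refine ⟨b, hb, nl b hb, ?_⟩
        rw [eo b hb]
        have := hw3 b hb
        have := h.le b hb
        omega
      · have : Cov L g y := by
          by_contra hh
          have := hmax y ⟨hy2, hh⟩
          omega
        obtain ⟨b, hb, hb1, hb2⟩ := this
        refine ⟨b, hb, nl b hb, ?_⟩
        rw [eo b hb]
        have := hxc' b hb
        have := h.le b hb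
        omega
    · intro a ha
      obtain ⟨z, ⟨hz1, hz2, hz3⟩, hz4⟩ := h.gap a ha
      rw [eo a ha]
      refine ⟨z, ⟨hz1, hz2, ?_, ?_⟩, ?_⟩
      · intro _ h1 h2
        have := hxc' a ha
        have := h.le a ha
        omega
      · intro b hb; rw [eo b hb]; exact hz3 b hb
      · intro y hy1 hy2 hy3
        obtain ⟨b, hb, hb'⟩ := hz4 y hy1 hy2 hy3
        right
        refine ⟨b, hb, ?_⟩
        rw [eo b hb]; exact hb'
  · intro a ha
    simp only [Finset.mem_insert, not_or] at ha
    rw [hg', Function.update_of_ne ha.1]; exact h.off a ha.2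
  · simp only [Finset.forall_mem_insert, el]
    refine ⟨le_rfl, fun a ha => ?_⟩
    rw [eo a ha]; exact h.le a ha
  · simp only [Finset.forall_mem_insert, el]
    refine ⟨⟨by omega, fun b hb => ?_⟩, fun a ha => ⟨?_, fun b hb => ?_⟩⟩
    · rw [eo b hb]; have := h.le b hb; have := h.lt b hb; omega
    · rw [eo a ha]; exact hw5 a ha
    · rw [eo a ha, eo b hb]; exact h.o1 a ha b hb
  · simp only [Finset.forall_mem_insert, el]
    refine ⟨⟨by omega, fun b hb => ?_⟩, fun a ha => ⟨?_, fun b hb => ?_⟩⟩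
    · rw [eo b hb]; intro h1 _; exact hw4 b hb h1.symm
    · rw [eo a ha]; have := h.le a ha; omega
    · rw [eo a ha, eo b hb]; exact h.o2 a ha b hb
  · simp only [Finset.forall_mem_insert, el]
    refine ⟨⟨by omega, fun b hb => ?_⟩, fun a ha => ⟨?_, fun b hb => ?_⟩⟩
    · rw [eo b hb]; have := hxc' b hb; omega
    · rw [eo a ha]; intro h1 _; exact hlab a ha h1
    · rw [eo a ha, eo b hb]; exact h.o3 a ha b hb

def FS {n : ℕ} (t : ℕ) (L : Finset (Fin n)) : Set (Fin n → ℕ × ℕ) := {g | VV t L g}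

def FP {n : ℕ} (t : ℕ) (L P : Finset (Fin n)) : Set (Fin n → ℕ × ℕ) :=
  {g | VV t L g ∧ L.filter (fun a => (g a).2 = t) = P}

theorem FS_finite {n : ℕ} (t : ℕ) (L : Finset (Fin n)) : (FS t L).Finite := by
  refine Set.Finite.subset (Set.Finite.pi' (t := fun _ => (Set.Iic ((t, t) : ℕ × ℕ)))
    (fun _ => Set.finite_Iic _)) ?_
  intro g hg a
  by_cases ha : a ∈ L
  · have h1 := hg.lt a ha
    have h2 := hg.le a ha
    exact Prod.mk_le_mk.mpr ⟨by omega, h2⟩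
  · rw [hg.off a ha]
    exact Prod.mk_le_mk.mpr ⟨by omega, by omega⟩

theorem FP_card {n : ℕ} (t : ℕ) (P : Finset (Fin n)) : ∀ L : Finset (Fin n), P ⊆ L →
    L.card ≤ t + 1 → (FP (t + 1) L P).ncard = (FS t (L \ P)).ncard := by
  induction P using Finset.induction_on_max with
  | empty =>
    intro L _ _
    congr 1
    ext g
    simp only [FP, FS, Set.mem_ofPred_eq, Finset.sdiff_empty, Finset.filter_eq_empty_iff]
    constructor
    · rintro ⟨h, h1⟩
      refine ⟨h.toWW, h.off, fun a ha => ?_, h.o1, h.o2, h.o3⟩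
      have := h.le a ha
      have := h1 ha
      omega
    · intro h
      refine ⟨⟨h.toWW, h.off, fun a ha => ?_, h.o1, h.o2, h.o3⟩, fun a ha => ?_⟩
      · have := h.le a ha; omega
      · have := h.le a ha; omega
  | insert l P hP ih =>
    intro L hL hc
    have hlL : l ∈ L := hL (Finset.mem_insert_self _ _)
    have hlP : l ∉ P := fun hh => lt_irrefl _ (hP l hh)
    have hsd : L \ insert l P = (L.erase l) \ P := by
      ext a; simp only [Finset.mem_sdiff, Finset.mem_insert, Finset.mem_erase]; tauto
    have hPL : P ⊆ L.erase l := by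
      intro a ha
      refine Finset.mem_erase.mpr ⟨?_, hL (Finset.mem_insert_of_mem ha)⟩
      rintro rfl; exact hlP ha
    have hcard : (L.erase l).card < t + 1 := by
      have := Finset.card_erase_lt_of_mem hlL
      omega
    rw [hsd, ← ih (L.erase l) hPL hcard.le]
    have facts : ∀ g ∈ FP (t + 1) L (insert l P), (g l).2 = t + 1 ∧ Outer L g l := by
      rintro g ⟨h, h1⟩
      have hl2 : (g l).2 = t + 1 := by
        have : l ∈ L.filter (fun a => (g a).2 = t + 1) := by
          rw [h1]; exact Finset.mem_insert_self _ _
        exact (Finset.mem_filter.mp this).2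
      refine ⟨hl2, h.outer hlL hl2 ?_⟩
      intro a ha ha2
      have : a ∈ insert l P := by rw [← h1]; exact Finset.mem_filter.mpr ⟨ha, ha2⟩
      rcases Finset.mem_insert.mp this with rfl | h3
      · exact le_rfl
      · exact (hP a h3).le
    refine Set.ncard_congr (fun g _ => Function.update g l (0, 0)) ?_ ?_ ?_
    · intro g hg
      obtain ⟨hl2, ho⟩ := facts g hg
      obtain ⟨h, h1⟩ := hg
      refine ⟨h.remove ho, ?_⟩
      ext a
      have h2 : a ∈ L.filter (fun a => (g a).2 = t + 1) ↔ a ∈ insert l P := by rw [h1]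
      simp only [Finset.mem_filter, Finset.mem_insert, Finset.mem_erase] at h2 ⊢
      by_cases hal : a = l
      · subst hal; simp [hlP]
      · rw [Function.update_of_ne hal]; tauto
    · intro g g' hg hg' hgg
      obtain ⟨hl2, ho⟩ := facts g hg
      obtain ⟨hl2', ho'⟩ := facts g' hg'
      have e : ∀ a, a ≠ l → g a = g' a := by
        intro a ha
        have := congrFun hgg a
        simpa [Function.update_of_ne ha] using this
      have n1 := VV.unique_aux hg.1 hg'.1 hlL hl2 hl2' ho ho' e
      have n2 := VV.unique_aux hg'.1 hg.1 hlL hl2' hl2 ho' ho (fun a ha => (e a ha).symm)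
      funext a
      by_cases ha : a = l
      · subst ha; exact Prod.ext (by omega) (by omega)
      · exact e a ha
    · rintro g ⟨h, h1⟩
      have hlab : ∀ a ∈ L.erase l, (g a).2 = t + 1 → a < l := by
        intro a ha ha2
        apply hP
        rw [← h1]
        exact Finset.mem_filter.mpr ⟨ha, ha2⟩
      obtain ⟨w, hw⟩ := h.exists_ext (Finset.notMem_erase l L) hcard hlab
      rw [Finset.insert_erase hlL] at hw
      refine ⟨Function.update g l (w, t + 1), ⟨hw, ?_⟩, ?_⟩
      · ext a
        have h2 : a ∈ (L.erase l).filter (fun a => (g a).2 = t + 1) ↔ a ∈ P := by rw [h1]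
        simp only [Finset.mem_filter, Finset.mem_insert, Finset.mem_erase] at h2 ⊢
        by_cases hal : a = l
        · subst hal; simp [hlL]
        · rw [Function.update_of_ne hal]; tauto
      · rw [Function.update_idem]
        funext a
        by_cases ha : a = l
        · subst ha; simp [h.off a (Finset.notMem_erase a L)]
        · rw [Function.update_of_ne ha]

theorem FS_rec {n : ℕ} (t : ℕ) (L : Finset (Fin n)) (hc : L.card ≤ t + 1) :
    (FS (t + 1) L).ncard = ∑ Q ∈ L.powerset, (FS t Q).ncard := by
  classical
  have h1 : (FS (t + 1) L).ncard = ∑ P ∈ L.powerset, (FP (t + 1) L P).ncard := by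
    rw [Set.ncard_eq_toFinset_card _ (FS_finite (t + 1) L)]
    rw [Finset.card_eq_sum_card_fiberwise (t := L.powerset)
      (f := fun g : Fin n → ℕ × ℕ => L.filter (fun a => (g a).2 = t + 1))]
    · refine Finset.sum_congr rfl fun P _ => ?_
      rw [← Set.ncard_coe_finset]
      congr 1
      ext g
      simp [FP, FS]
    · intro g _
      exact Finset.mem_coe.mpr (Finset.mem_powerset.mpr (Finset.filter_subset _ _))
  rw [h1]
  refine Finset.sum_nbij' (fun P => L \ P) (fun P => L \ P) ?_ ?_ ?_ ?_ ?_
  · intro P _; simp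
  · intro P _; simp
  · intro P hP; simpa using hP
  · intro P hP; simpa using hP
  · intro P hP
    exact FP_card t P L (Finset.mem_powerset.mp hP) hc

theorem powsum0 {α : Type*} [DecidableEq α] (T : ℤ) (L : Finset α) :
    ∑ Q ∈ L.powerset, T ^ Q.card = (T + 1) ^ L.card := by
  induction L using Finset.induction_on with
  | empty => simp
  | insert a L ha ih =>
    rw [Finset.sum_powerset_insert ha, Finset.card_insert_of_notMem ha, ih]
    have : ∑ Q ∈ L.powerset, T ^ (insert a Q).card = ∑ Q ∈ L.powerset, T ^ Q.card * T := by
      refine Finset.sum_congr rfl fun Q hQ => ?_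
      rw [Finset.card_insert_of_notMem (fun h => ha (Finset.mem_powerset.mp hQ h)), pow_succ]
    rw [this, ← Finset.sum_mul, ih]
    ring

theorem powsum1 {α : Type*} [DecidableEq α] (T : ℤ) (L : Finset α) :
    (T + 1) * ∑ Q ∈ L.powerset, (T - Q.card) * T ^ Q.card =
      T * ((T + 1 - L.card) * (T + 1) ^ L.card) := by
  induction L using Finset.induction_on with
  | empty => simp; ring
  | insert a L ha ih =>
    rw [Finset.sum_powerset_insert ha, Finset.card_insert_of_notMem ha]
    have : ∑ Q ∈ L.powerset, (T - (insert a Q).card) * T ^ (insert a Q).card =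
        ∑ Q ∈ L.powerset, (T * ((T - Q.card) * T ^ Q.card) - T * T ^ Q.card) := by
      refine Finset.sum_congr rfl fun Q hQ => ?_
      rw [Finset.card_insert_of_notMem (fun h => ha (Finset.mem_powerset.mp hQ h)), pow_succ]
      push_cast; ring
    rw [this, Finset.sum_sub_distrib, ← Finset.mul_sum, ← Finset.mul_sum, powsum0]
    push_cast
    rw [pow_succ]
    linear_combination (1 + T) * ih

theorem FS_card {n : ℕ} (t : ℕ) : ∀ L : Finset (Fin n), L.card ≤ t + 1 →
    ((t : ℤ) + 1) * (FS t L).ncard = (t + 1 - L.card) * (t + 1) ^ L.card := by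
  have hzero : ∀ t (L : Finset (Fin n)), L.card = t + 1 → (FS t L).ncard = 0 := by
    intro t L hL
    rw [Set.ncard_eq_zero (FS_finite t L), Set.eq_empty_iff_forall_notMem]
    intro g hg
    classical
    have h3 : (Finset.filter (fun x => Cov L g x) (Finset.range t)).card ≤ t := by
      refine (Finset.card_filter_le _ _).trans (by simp)
    have h4 := hg.toWW.card t hg.le
    have : L.card ≤ t := by
      rw [← h4]; convert h3
    omega
  induction t with
  | zero =>
    intro L hL
    rcases Nat.eq_zero_or_pos L.card with h | h
    · rw [Finset.card_eq_zero] at h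
      subst h
      have : FS 0 (∅ : Finset (Fin n)) = {fun _ => (0, 0)} := by
        ext g
        simp only [FS, Set.mem_ofPred_eq, Set.mem_singleton_iff]
        constructor
        · intro hg; funext a; exact hg.off a (by simp)
        · rintro rfl
          exact ⟨⟨by simp, by simp, by simp, by simp⟩, by simp, by simp, by simp, by simp, by simp⟩
      rw [this]; simp
    · have : L.card = 1 := by omega
      rw [hzero 0 L this, this]; simp
  | succ t ih =>
    intro L hL
    rcases Nat.lt_or_ge (t + 1) L.card with h | h
    · have : L.card = t + 1 + 1 := by omega
      rw [hzero _ L this, this]; simp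
    · have h1 := FS_rec t L h
      have h2 : ((t : ℤ) + 1) * (FS (t + 1) L).ncard =
          ∑ Q ∈ L.powerset, ((t + 1 : ℤ) - Q.card) * (t + 1) ^ Q.card := by
        rw [h1]; push_cast; rw [Finset.mul_sum]
        refine Finset.sum_congr rfl fun Q hQ => ?_
        exact ih Q ((Finset.card_le_card (Finset.mem_powerset.mp hQ)).trans h)
      have h3 := powsum1 ((t : ℤ) + 1) L
      rw [← h2] at h3
      have h4 : ((t : ℤ) + 1) ≠ 0 := by positivity
      apply mul_left_cancel₀ h4
      push_cast
      linear_combination h3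

def GR {n : ℕ} (L : Finset (Fin n)) (g : Fin n → ℕ × ℕ) : SimpleGraph ℕ :=
  SimpleGraph.fromEdgeSet {e : Sym2 ℕ | ∃ a ∈ L, e = s((g a).1, (g a).2)}

theorem GR_adj {n : ℕ} {L : Finset (Fin n)} {g : Fin n → ℕ × ℕ} {u v : ℕ} :
    (GR L g).Adj u v ↔ (∃ a ∈ L, (u = (g a).1 ∧ v = (g a).2) ∨ (u = (g a).2 ∧ v = (g a).1)) ∧
      u ≠ v := by
  simp only [GR, SimpleGraph.fromEdgeSet_adj, Set.mem_ofPred_eq, Sym2.eq_iff]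

theorem GR_mono {n : ℕ} {L L' : Finset (Fin n)} {g : Fin n → ℕ × ℕ} (h : L ⊆ L') :
    GR L g ≤ GR L' g := by
  intro u v
  rw [GR_adj, GR_adj]
  rintro ⟨⟨a, ha, h1⟩, h2⟩
  exact ⟨⟨a, h ha, h1⟩, h2⟩

theorem GR_cov {n : ℕ} {L : Finset (Fin n)} {g : Fin n → ℕ × ℕ} {u v : ℕ}
    (hlt : ∀ a ∈ L, (g a).1 < (g a).2) (h : (GR L g).Reachable u v) (x : ℕ) (hx : (u ≤ x ∧ x < v) ∨ (v ≤ x ∧ x < u)) :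
    Cov L g x := by
  obtain ⟨p⟩ := h
  induction p with
  | nil => omega
  | cons hadj p ih =>
    rename_i u u' v
    by_cases hs : (u' ≤ x ∧ x < v) ∨ (v ≤ x ∧ x < u')
    · exact ih hs
    · obtain ⟨⟨a, ha, h1⟩, h2⟩ := GR_adj.mp hadj
      have := hlt a ha
      exact ⟨a, ha, by omega, by omega⟩

theorem WW.acyclic {n : ℕ} {L : Finset (Fin n)} {g : Fin n → ℕ × ℕ} (h : WW L g) :
    (GR L g).IsAcyclic := by
  refine WW.induct (g := g) (fun L => (GR L g).IsAcyclic) ?_ ?_ L h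
  · have : GR (∅ : Finset (Fin n)) g = ⊥ := by
      ext u v; rw [GR_adj]; simp
    rw [this]; exact SimpleGraph.isAcyclic_bot
  · intro L l hl h ho ih
    obtain ⟨x, hx1, hx2, hx3, hx4⟩ := h.newgap hl ho
    have hn : ¬ (GR (L.erase l) g).Reachable (g l).1 (g l).2 := fun hr =>
      hx3 (GR_cov (h.erase ho).lt hr x (Or.inl ⟨hx1, hx2⟩))
    refine (SimpleGraph.IsAcyclic.sup_edge_of_not_reachable hn ih).anti ?_
    intro u v
    rw [GR_adj, SimpleGraph.sup_adj, GR_adj, SimpleGraph.edge_adj]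
    rintro ⟨⟨a, ha, h1⟩, h2⟩
    by_cases hal : a = l
    · subst hal
      right
      refine ⟨?_, h2⟩
      tauto
    · left
      exact ⟨⟨a, Finset.mem_erase.mpr ⟨hal, ha⟩, h1⟩, h2⟩

def nest {n : ℕ} (L : Finset (Fin n)) (g : Fin n → ℕ × ℕ) (a : Fin n) : Finset (Fin n) :=
  L.filter (fun b => b ≠ a ∧ (g a).1 ≤ (g b).1 ∧ (g b).2 ≤ (g a).2)

theorem walk_nest {n : ℕ} {L : Finset (Fin n)} {g : Fin n → ℕ × ℕ}
    (hlt : ∀ a ∈ L, (g a).1 < (g a).2)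
    (nc : ∀ a ∈ L, ∀ b ∈ L, ¬ ((g a).1 < (g b).1 ∧ (g b).1 < (g a).2 ∧ (g a).2 < (g b).2))
    {a : Fin n} (ha : a ∈ L) {y z : ℕ} (h : (GR L g).Reachable y z)
    (hy : (g a).1 ≤ y ∧ y ≤ (g a).2) (hz : ¬ ((g a).1 < z ∧ z < (g a).2)) :
    (GR (nest L g a) g).Reachable y (g a).1 ∨ (GR (nest L g a) g).Reachable y (g a).2 := by
  obtain ⟨p⟩ := h
  induction p with
  | nil =>
    rename_i u
    have : u = (g a).1 ∨ u = (g a).2 := by omega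
    rcases this with h | h
    · left; rw [h]
    · right; rw [h]
  | cons hadj p ih =>
    rename_i u u' v
    by_cases h1 : u = (g a).1
    · left; rw [h1]
    by_cases h2 : u = (g a).2
    · right; rw [h2]
    obtain ⟨⟨b, hb, hb1⟩, hne⟩ := GR_adj.mp hadj
    have n1 := nc a ha b hb
    have n2 := nc b hb a ha
    have hbl := hlt b hb
    have hnest : b ∈ nest L g a := by
      refine Finset.mem_filter.mpr ⟨hb, ?_, by omega, by omega⟩
      rintro rfl
      omega
    have hadj' : (GR (nest L g a) g).Adj u u' := GR_adj.mpr ⟨⟨b, hnest, hb1⟩, hne⟩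
    have hu' : (g a).1 ≤ u' ∧ u' ≤ (g a).2 := by omega
    rcases ih hu' hz with h | h
    · exact Or.inl (hadj'.reachable.trans h)
    · exact Or.inr (hadj'.reachable.trans h)

theorem tree_WW {n : ℕ} {g : Fin n → ℕ × ℕ} (t : ℕ)
    (hlt : ∀ a ∈ Finset.univ, (g a).1 < (g a).2)
    (hle : ∀ a, (g a).2 ≤ t)
    (nc : ∀ a ∈ Finset.univ, ∀ b ∈ Finset.univ,
      ¬ ((g a).1 < (g b).1 ∧ (g b).1 < (g a).2 ∧ (g a).2 < (g b).2))
    (inj : Function.Injective g) (hac : (GR Finset.univ g).IsAcyclic)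
    (hconn : ∀ u v, u ≤ t → v ≤ t → (GR Finset.univ g).Reachable u v) :
    WW Finset.univ g := by
  refine ⟨hlt, nc, fun a _ b _ h1 h2 => inj (Prod.ext h1 h2), ?_⟩
  intro a ha
  set H := GR (nest Finset.univ g a) g with hH
  have hbr : ¬ H.Reachable (g a).1 (g a).2 := by
    intro hr
    have hadj : (GR Finset.univ g).Adj (g a).1 (g a).2 :=
      GR_adj.mpr ⟨⟨a, ha, Or.inl ⟨rfl, rfl⟩⟩, (hlt a ha).ne⟩
    have hb := SimpleGraph.isAcyclic_iff_forall_adj_isBridge.mp hac hadj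
    rw [SimpleGraph.isBridge_iff] at hb
    apply hb
    refine hr.mono ?_
    intro u v huv
    have huv' := huv
    rw [hH, GR_adj] at huv
    obtain ⟨⟨b, hb, hb1⟩, hne⟩ := huv
    obtain ⟨_, hba, _, _⟩ := Finset.mem_filter.mp hb
    rw [SimpleGraph.deleteEdges_adj]
    refine ⟨GR_mono (Finset.filter_subset _ _) huv', ?_⟩
    simp only [Set.mem_singleton_iff, Sym2.eq_iff]
    have l1 := hlt a ha
    have l2 := hlt b (Finset.mem_univ _)
    intro hh
    apply hba
    apply inj
    exact Prod.ext (by omega) (by omega)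
  have hdich : ∀ y, (g a).1 ≤ y → y ≤ (g a).2 → H.Reachable y (g a).1 ∨ H.Reachable y (g a).2 := by
    intro y h1 h2
    have h3 := hle a
    have h4 := hlt a ha
    exact walk_nest hlt nc ha (hconn y (g a).1 (by omega) (by omega)) ⟨h1, h2⟩ (by omega)
  classical
  obtain ⟨x, hx, hmax⟩ := Finset.exists_max_image
    ((Finset.Icc (g a).1 (g a).2).filter (fun y => H.Reachable y (g a).1)) id
    ⟨(g a).1, Finset.mem_filter.mpr ⟨Finset.mem_Icc.mpr ⟨le_rfl, (hlt a ha).le⟩, by rfl⟩⟩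
  simp only [Finset.mem_filter, Finset.mem_Icc, id] at hx hmax
  obtain ⟨⟨hx1, hx2⟩, hxr⟩ := hx
  have hxs : x < (g a).2 := by
    refine lt_of_le_of_ne hx2 ?_
    rintro rfl
    exact hbr hxr.symm
  refine ⟨x, ⟨hx1, hxs, ?_⟩, ?_⟩
  · rintro b hb hba hb1 hb2 ⟨hb3, hb4⟩
    have hbn : b ∈ nest Finset.univ g a := Finset.mem_filter.mpr ⟨hb, hba, hb1, hb2⟩
    have hbadj : H.Adj (g b).1 (g b).2 :=
      GR_adj.mpr ⟨⟨b, hbn, Or.inl ⟨rfl, rfl⟩⟩, (hlt b hb).ne⟩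
    have r2 : ¬ H.Reachable (g b).2 (g a).1 := by
      intro hr
      have := hmax _ ⟨⟨by omega, hb2⟩, hr⟩
      omega
    have r1 : ¬ H.Reachable (g b).1 (g a).1 := fun hr => r2 (hbadj.symm.reachable.trans hr)
    have e1 : (g b).1 ≠ (g a).1 := by
      intro e; rw [e] at r1; exact r1 (by rfl)
    have := walk_nest (L := nest Finset.univ g a) (g := g)
      (fun a _ => hlt a (Finset.mem_univ _))
      (fun a _ b _ => nc a (Finset.mem_univ _) b (Finset.mem_univ _)) hbn hxr
      ⟨hb3, hb4.le⟩ (by omega)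
    have hm : GR (nest (nest Finset.univ g a) g b) g ≤ H := GR_mono (Finset.filter_subset _ _)
    rcases this with h | h
    · exact r1 ((h.mono hm).symm.trans hxr)
    · exact r2 ((h.mono hm).symm.trans hxr)
  · intro y hy1 hy2 hy3
    have : Cov (nest Finset.univ g a) g y := by
      rcases Nat.lt_or_ge y x with h | h
      · exact GR_cov (fun a _ => hlt a (Finset.mem_univ _)) hxr y (Or.inr ⟨hy1, h⟩)
      · have h5 : ¬ H.Reachable (x + 1) (g a).1 := by
          intro hr
          have := hmax _ ⟨⟨by omega, by omega⟩, hr⟩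
          omega
        have h6 := (hdich (x + 1) (by omega) (by omega)).resolve_left h5
        exact GR_cov (fun a _ => hlt a (Finset.mem_univ _)) h6 y (Or.inl ⟨by omega, hy2⟩)
    obtain ⟨b, hb, hb'⟩ := this
    obtain ⟨h1, h2, h3, h4⟩ := Finset.mem_filter.mp hb
    exact ⟨b, h1, h2, h3, h4, hb'⟩

theorem conn_of_card {n : ℕ} {g : Fin n → ℕ × ℕ}
    (hlt : ∀ a, (g a).1 < (g a).2) (hle : ∀ a, (g a).2 ≤ n)
    (inj : Function.Injective g) (hac : (GR Finset.univ g).IsAcyclic) :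
    ∀ u v, u ≤ n → v ≤ n → (GR Finset.univ g).Reachable u v := by
  classical
  let f : Fin (n + 1) ↪ ℕ := Fin.valEmbedding
  let G0 : SimpleGraph (Fin (n + 1)) := (GR Finset.univ g).comap f
  have hac0 : G0.IsAcyclic := hac.of_comap f
  obtain ⟨T, hGT, -, hT⟩ := SimpleGraph.Connected.exists_isTree_le_of_le_of_isAcyclic
    (SimpleGraph.connected_top (V := Fin (n + 1))) (le_top (a := G0)) hac0
  have hTc := hT.card_edgeFinset
  rw [Fintype.card_fin] at hTc
  have hG0 : n ≤ G0.edgeFinset.card := by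
    let φ : Fin n → Sym2 (Fin (n + 1)) := fun a =>
      s(⟨(g a).1, by have := hlt a; have := hle a; omega⟩, ⟨(g a).2, by have := hle a; omega⟩)
    have hφ : Function.Injective φ := by
      intro a b hab
      simp only [φ, Sym2.eq_iff, Fin.mk.injEq] at hab
      have := hlt a
      have := hlt b
      exact inj (Prod.ext (by omega) (by omega))
    have : (Finset.univ.image φ) ⊆ G0.edgeFinset := by
      intro e he
      obtain ⟨a, -, rfl⟩ := Finset.mem_image.mp he
      rw [SimpleGraph.mem_edgeFinset, SimpleGraph.mem_edgeSet]
      exact GR_adj.mpr ⟨⟨a, Finset.mem_univ _, Or.inl ⟨rfl, rfl⟩⟩, (hlt a).ne⟩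
    have h2 := Finset.card_le_card this
    rw [Finset.card_image_of_injective _ hφ, Finset.card_univ, Fintype.card_fin] at h2
    exact h2
  have hsub : G0.edgeFinset ⊆ T.edgeFinset := SimpleGraph.edgeFinset_mono hGT
  have heq : G0.edgeFinset = T.edgeFinset := Finset.eq_of_subset_of_card_le hsub (by omega)
  have hE : G0 = T := SimpleGraph.edgeFinset_inj.mp heq
  intro u v hu hv
  have hr : G0.Reachable ⟨u, by omega⟩ ⟨v, by omega⟩ := by
    rw [hE]; exact hT.connected _ _
  exact hr.map (SimpleGraph.Hom.comap f (GR Finset.univ g))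

theorem leD_iff {n : ℕ} {d : Finset (ℕ × ℕ)} {g : Fin n → ℕ × ℕ} (hd : Finset.univ.image g = d)
    (hlt : ∀ a, (g a).1 < (g a).2) :
    (Function.Injective g ∧ ∀ a b, leD (fun _ => false) d (g a) (g b) → a ≤ b) ↔
    (Function.Injective g ∧ (∀ a b, (g a).2 = (g b).1 → a < b) ∧
      (∀ a b, (g a).1 = (g b).1 → (g b).2 < (g a).2 → a < b) ∧
      (∀ a b, (g a).2 = (g b).2 → (g b).1 < (g a).1 → a < b)) := by
  have mem : ∀ a, g a ∈ d := fun a => by rw [← hd]; exact Finset.mem_image_of_mem _ (Finset.mem_univ _)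
  constructor
  · rintro ⟨hi, h⟩
    have key : ∀ a b, SharesEndpoint (g a) (g b) → Cw (fun _ => false) (g b) (g a) → g a ≠ g b →
        a < b := by
      intro a b h1 h2 h3
      refine lt_of_le_of_ne (h a b (Relation.ReflTransGen.single ⟨mem a, mem b, h1, h2⟩)) ?_
      rintro rfl; exact h3 rfl
    refine ⟨hi, fun a b e => ?_, fun a b e e' => ?_, fun a b e e' => ?_⟩
    · refine key a b (by unfold SharesEndpoint; omega) (by simp [Cw]; omega) ?_
      intro hh; rw [hh] at e; have := hlt b; omega
    · refine key a b (by unfold SharesEndpoint; omega) (by simp [Cw]; omega) ?_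
      intro hh; rw [hh] at e'; omega
    · refine key a b (by unfold SharesEndpoint; omega) (by simp [Cw]; omega) ?_
      intro hh; rw [hh] at e'; omega
  · rintro ⟨hi, o1, o2, o3⟩
    refine ⟨hi, ?_⟩
    have key : ∀ x y, leD (fun _ => false) d x y → ∀ a b, x = g a → y = g b → a ≤ b := by
      intro x y h
      induction h with
      | refl => intro a b h1 h2; exact (hi (h1.symm.trans h2)).le
      | tail h1 h2 ih =>
        rename_i y z
        intro a c ha hc
        obtain ⟨hy, hz, hs, hcw⟩ := h2
        rw [← hd] at hy
        obtain ⟨b, -, hb⟩ := Finset.mem_image.mp hy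
        refine (ih a b ha hb.symm).trans ?_
        rw [← hb, hc] at hcw
        simp only [Cw, Bool.false_eq_true, and_false, and_true, false_or, or_false] at hcw
        rcases hcw with h | ⟨h, h'⟩ | ⟨h, h'⟩
        · exact (o1 b c h).le
        · exact (o2 b c h.symm h').le
        · exact (o3 b c h.symm h').le
    exact fun a b h => key _ _ h a b rfl rfl

theorem chordGraph_eq {n : ℕ} {d : Finset (ℕ × ℕ)} {g : Fin n → ℕ × ℕ}
    (hd : Finset.univ.image g = d) : chordGraph d = GR Finset.univ g := by
  unfold chordGraph GR
  congr 1
  ext e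
  simp [← hd]

theorem mem_FS_iff {n : ℕ} (g : Fin n → ℕ × ℕ) (d : Finset (ℕ × ℕ)) :
    (g ∈ FS n Finset.univ ∧ Finset.univ.image g = d) ↔
    ((d.card = n ∧ IsDiagram n (fun _ => false) d) ∧ (∀ a, g a ∈ d) ∧ Function.Injective g ∧
      ∀ a b, leD (fun _ => false) d (g a) (g b) → a ≤ b) := by
  constructor
  · rintro ⟨h, hd⟩
    have hi : Function.Injective g := fun a b hab =>
      h.inj a (Finset.mem_univ _) b (Finset.mem_univ _) (by rw [hab]) (by rw [hab])
    have hlt := fun a => h.lt a (Finset.mem_univ _)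
    refine ⟨⟨?_, ?_, ?_, ?_⟩, ?_, ?_⟩
    · rw [← hd, Finset.card_image_of_injective _ hi]; simp
    · rw [← hd]
      intro c hc
      obtain ⟨a, -, rfl⟩ := Finset.mem_image.mp hc
      exact ⟨hlt a, h.le a (Finset.mem_univ _)⟩
    · rw [← hd]
      intro c hc c' hc'
      obtain ⟨a, -, rfl⟩ := Finset.mem_image.mp hc
      obtain ⟨b, -, rfl⟩ := Finset.mem_image.mp hc'
      have h1 := h.nc a (Finset.mem_univ _) b (Finset.mem_univ _)
      have h2 := h.nc b (Finset.mem_univ _) a (Finset.mem_univ _)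
      simp only [Crosses, ne_eq, not_true_eq_false, and_false, and_true, or_false]
      omega
    · rw [chordGraph_eq hd]; exact h.toWW.acyclic
    · intro a; rw [← hd]; exact Finset.mem_image_of_mem _ (Finset.mem_univ _)
    · refine (leD_iff hd hlt).mpr ⟨hi, ?_, ?_, ?_⟩
      · intro a b; exact h.o1 a (Finset.mem_univ _) b (Finset.mem_univ _)
      · intro a b; exact h.o2 a (Finset.mem_univ _) b (Finset.mem_univ _)
      · intro a b; exact h.o3 a (Finset.mem_univ _) b (Finset.mem_univ _)
  · rintro ⟨⟨hc, hv, hnc, hac⟩, hm, hi, hle⟩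
    have hd : Finset.univ.image g = d := by
      refine Finset.eq_of_subset_of_card_le ?_ ?_
      · intro c hc
        obtain ⟨a, -, rfl⟩ := Finset.mem_image.mp hc
        exact hm a
      · rw [Finset.card_image_of_injective _ hi, hc]; simp
    have hlt : ∀ a, (g a).1 < (g a).2 := fun a => (hv _ (hm a)).1
    have hlen : ∀ a, (g a).2 ≤ n := fun a => (hv _ (hm a)).2
    obtain ⟨-, o1, o2, o3⟩ := (leD_iff hd hlt).mp ⟨hi, hle⟩
    rw [chordGraph_eq hd] at hac
    refine ⟨⟨tree_WW n (fun a _ => hlt a) hlen ?_ hi hac (conn_of_card hlt hlen hi hac),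
      by simp, fun a _ => hlen a, fun a _ b _ => o1 a b, fun a _ b _ => o2 a b,
      fun a _ b _ => o3 a b⟩, hd⟩
    intro a _ b _ hh
    apply hnc _ (hm a) _ (hm b)
    simp only [Crosses, ne_eq, not_true_eq_false, and_false, and_true, or_false]
    omega

theorem linExtCount_eq {n : ℕ} (d : Finset (ℕ × ℕ)) (hd : d.card = n) :
    linExtCount (fun _ => false) d = Set.ncard {g : Fin n → ℕ × ℕ | (∀ a, g a ∈ d) ∧
      Function.Injective g ∧ ∀ a b, leD (fun _ => false) d (g a) (g b) → a ≤ b} := by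
  subst hd; rfl

theorem diag_finite (n : ℕ) :
    {d : Finset (ℕ × ℕ) | d.card = n ∧ IsDiagram n (fun _ => false) d}.Finite := by
  refine Set.Finite.subset (Finset.finite_toSet (Finset.Iic ((n, n) : ℕ × ℕ)).powerset) ?_
  rintro d ⟨-, h, -⟩
  refine Finset.mem_coe.mpr (Finset.mem_powerset.mpr ?_)
  intro c hc
  have := h c hc
  exact Finset.mem_Iic.mpr (Prod.mk_le_mk.mpr ⟨by omega, by omega⟩)

/-- Corollary 6.2: `(n+1)^{n−1}` equals the sum over all noncrossing spanning trees `d` on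
`{0,…,n}` of the number of linear extensions of `P_d`. -/
theorem cayley_sum_of_linear_extensions (n : ℕ) (hn : 1 ≤ n) :
    (n + 1) ^ (n - 1) =
      ∑ᶠ d ∈ {d : Finset (ℕ × ℕ) | d.card = n ∧ IsDiagram n (fun _ => false) d},
        linExtCount (fun _ => false) d := by
  classical
  rw [finsum_mem_eq_finite_toFinset_sum _ (diag_finite n)]
  have hsum : ∑ d ∈ (diag_finite n).toFinset, linExtCount (fun _ => false) d =
      (FS n (Finset.univ : Finset (Fin n))).ncard := by
    rw [Set.ncard_eq_toFinset_card _ (FS_finite n Finset.univ)]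
    rw [Finset.card_eq_sum_card_fiberwise (t := (diag_finite n).toFinset)
      (f := fun g : Fin n → ℕ × ℕ => Finset.univ.image g)]
    · refine Finset.sum_congr rfl fun d hd => ?_
      have hd' := (Set.Finite.mem_toFinset _).mp hd
      rw [linExtCount_eq d hd'.1, ← Set.ncard_coe_finset]
      congr 1
      ext g
      rw [Finset.mem_coe, Finset.mem_filter, Set.Finite.mem_toFinset, mem_FS_iff]
      exact ⟨fun h => ⟨hd', h⟩, fun h => h.2⟩
    · intro g hg
      rw [Finset.mem_coe, Set.Finite.mem_toFinset] at hg
      rw [Finset.mem_coe, Set.Finite.mem_toFinset]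
      exact ((mem_FS_iff g _).mp ⟨hg, rfl⟩).1
  rw [hsum]
  have h := FS_card n (Finset.univ : Finset (Fin n)) (by simp)
  simp only [Finset.card_univ, Fintype.card_fin] at h
  obtain ⟨k, rfl⟩ : ∃ k, n = k + 1 := ⟨n - 1, by omega⟩
  have h' : ((k + 1 + 1 : ℕ)) * (FS (k + 1) (Finset.univ : Finset (Fin (k + 1)))).ncard =
      (k + 1 + 1) * (k + 1 + 1) ^ k := by
    zify
    push_cast at h
    rw [h, pow_succ]
    ring
  have := Nat.eq_of_mul_eq_mul_left (by omega) h'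
  rw [this]
  simp

end ESPaper
end

section
/- Let n ≥ 1, ε = (−,…,−), and k ∈ {1,…,n}. Define a map f on good-labeled strand diagrams with k strands as follows: given a strand diagram d with chords labeled bijectively by {1,…,k} via a good labeling, write c(i_ℓ, j_ℓ) for the chord with label ℓ (where i_ℓ < j_ℓ), and set π_1 equal to the partition of {1,…,n+1} into singletons and, for s = 1,…,k, let π_{s+1} be obtained from π_s by merging the block containing i_s+1 with the block containing j_s+1; put f(d, labeling) = (π_1, π_2, …, π_{k+1}). Then f is a bijection from the set of good-labeled strand diagrams with k strands onto the set of tuples (π_1, …, π_{k+1}) of noncrossing partitions of {1,…,n+1} such that π_1 is the partition into singletons and, for each j ≥ 2, π_j is obtained from π_{j−1} by replacing two distinct blocks B, B′ of π_{j−1} by their union B ∪ B′. In particular, for k = n this is a bijection between good-labeled strand diagrams with n strands and maximal chains in the lattice of noncrossing partitions of {1,…,n+1}. -/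
namespace ESPaper

/-- The finpartition `π` of `{1,…,n+1}` is noncrossing. -/
def NoncrossingPart (n : ℕ) (π : Finpartition (Finset.Icc 1 (n + 1) : Finset ℕ)) : Prop :=
  ¬ ∃ a b c d : ℕ, a < b ∧ b < c ∧ c < d ∧
      ∃ B1 ∈ π.parts, ∃ B2 ∈ π.parts, B1 ≠ B2 ∧ a ∈ B1 ∧ c ∈ B1 ∧ b ∈ B2 ∧ d ∈ B2

/-- `π'` is obtained from `π` by merging the (distinct) blocks containing `x` and `y`. -/
def MergeAt (n : ℕ) (π π' : Finpartition (Finset.Icc 1 (n + 1) : Finset ℕ))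
    (x y : ℕ) : Prop :=
  ∃ B1 ∈ π.parts, ∃ B2 ∈ π.parts, B1 ≠ B2 ∧ x ∈ B1 ∧ y ∈ B2 ∧
    π'.parts = insert (B1 ∪ B2) ((π.parts.erase B1).erase B2)

/-- `π'` is obtained from `π` by replacing two distinct blocks by their union. -/
def IsMergeStep (n : ℕ) (π π' : Finpartition (Finset.Icc 1 (n + 1) : Finset ℕ)) : Prop :=
  ∃ B1 ∈ π.parts, ∃ B2 ∈ π.parts, B1 ≠ B2 ∧
    π'.parts = insert (B1 ∪ B2) ((π.parts.erase B1).erase B2)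

/-- same block -/
def Rel {n : ℕ} (π : Finpartition (Finset.Icc 1 (n + 1) : Finset ℕ)) (u v : ℕ) : Prop :=
  ∃ B ∈ π.parts, u ∈ B ∧ v ∈ B

lemma Rel.symm {n : ℕ} {π : Finpartition (Finset.Icc 1 (n + 1) : Finset ℕ)} {u v : ℕ}
    (h : Rel π u v) : Rel π v u := by
  obtain ⟨B, hB, h1, h2⟩ := h
  exact ⟨B, hB, h2, h1⟩

lemma Rel.iff_mem {n : ℕ} {π : Finpartition (Finset.Icc 1 (n + 1) : Finset ℕ)} {u v : ℕ}
    {B : Finset ℕ} (hB : B ∈ π.parts) (hu : u ∈ B) : Rel π u v ↔ v ∈ B := by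
  constructor
  · rintro ⟨C, hC, h1, h2⟩
    rw [π.eq_of_mem_parts hB hC hu h1]
    exact h2
  · intro h
    exact ⟨B, hB, hu, h⟩

lemma Rel.trans {n : ℕ} {π : Finpartition (Finset.Icc 1 (n + 1) : Finset ℕ)} {u v w : ℕ}
    (h : Rel π u v) (h' : Rel π v w) : Rel π u w := by
  obtain ⟨B, hB, h1, h2⟩ := h
  exact ⟨B, hB, h1, (Rel.iff_mem hB h2).1 h'⟩

lemma Rel.bd {n : ℕ} {π : Finpartition (Finset.Icc 1 (n + 1) : Finset ℕ)} {u v : ℕ}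
    (h : Rel π u v) : (1 ≤ u ∧ u ≤ n + 1) ∧ 1 ≤ v ∧ v ≤ n + 1 := by
  obtain ⟨B, hB, h1, h2⟩ := h
  exact ⟨Finset.mem_Icc.1 (π.subset hB h1), Finset.mem_Icc.1 (π.subset hB h2)⟩

lemma Rel.refl {n : ℕ} (π : Finpartition (Finset.Icc 1 (n + 1) : Finset ℕ)) {u : ℕ}
    (h1 : 1 ≤ u) (h2 : u ≤ n + 1) : Rel π u u := by
  obtain ⟨B, hB, h⟩ := π.exists_mem (Finset.mem_Icc.2 ⟨h1, h2⟩)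
  exact ⟨B, hB, h, h⟩

lemma nc_iff {n : ℕ} (π : Finpartition (Finset.Icc 1 (n + 1) : Finset ℕ)) :
    NoncrossingPart n π ↔ ∀ a b c d, a < b → b < c → c < d → Rel π a c → Rel π b d → Rel π a b := by
  constructor
  · rintro h a b c d h1 h2 h3 ⟨B, hB, ha, hc⟩ ⟨B', hB', hb, hd⟩
    by_contra hne
    refine h ⟨a, b, c, d, h1, h2, h3, B, hB, B', hB', ?_, ha, hc, hb, hd⟩
    rintro rfl
    exact hne ⟨B, hB, ha, hb⟩
  · rintro h ⟨a, b, c, d, h1, h2, h3, B, hB, B', hB', hne, ha, hc, hb, hd⟩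
    have := h a b c d h1 h2 h3 ⟨B, hB, ha, hc⟩ ⟨B', hB', hb, hd⟩
    rw [Rel.iff_mem hB ha] at this
    exact hne (π.eq_of_mem_parts hB hB' this hb)

lemma merge_rel {n : ℕ} {π π' : Finpartition (Finset.Icc 1 (n + 1) : Finset ℕ)} {x y : ℕ}
    (h : MergeAt n π π' x y) : ¬ Rel π x y ∧ ∀ u v, Rel π' u v ↔
      Rel π u v ∨ (Rel π u x ∧ Rel π y v) ∨ (Rel π u y ∧ Rel π x v) := by
  obtain ⟨A, hA, B, hB, hne, hx, hy, hp⟩ := h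
  have hnr : ¬ Rel π x y := by
    rw [Rel.iff_mem hA hx]
    intro hh
    exact hne (π.eq_of_mem_parts hA hB hh hy)
  refine ⟨hnr, fun u v => ?_⟩
  rw [Rel.iff_mem hA hx, Rel.iff_mem hB hy]
  have e1 : Rel π u x ↔ u ∈ A := ⟨fun h => (Rel.iff_mem hA hx).1 h.symm,
    fun h => ⟨A, hA, h, hx⟩⟩
  have e2 : Rel π u y ↔ u ∈ B := ⟨fun h => (Rel.iff_mem hB hy).1 h.symm,
    fun h => ⟨B, hB, h, hy⟩⟩
  rw [e1, e2]
  constructor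
  · rintro ⟨C, hC, hu, hv⟩
    rw [hp, Finset.mem_insert] at hC
    rcases hC with rfl | hC
    · rw [Finset.mem_union] at hu hv
      rcases hu with hu | hu <;> rcases hv with hv | hv
      · exact Or.inl ⟨A, hA, hu, hv⟩
      · exact Or.inr (Or.inl ⟨hu, hv⟩)
      · exact Or.inr (Or.inr ⟨hu, hv⟩)
      · exact Or.inl ⟨B, hB, hu, hv⟩
    · exact Or.inl ⟨C, Finset.mem_of_mem_erase (Finset.mem_of_mem_erase hC), hu, hv⟩
  · have hAB : A ∪ B ∈ π'.parts := by rw [hp]; exact Finset.mem_insert_self _ _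
    rintro (⟨C, hC, hu, hv⟩ | ⟨hu, hv⟩ | ⟨hu, hv⟩)
    · by_cases h1 : C = A
      · subst h1
        exact ⟨_, hAB, Finset.mem_union_left _ hu, Finset.mem_union_left _ hv⟩
      by_cases h2 : C = B
      · subst h2
        exact ⟨_, hAB, Finset.mem_union_right _ hu, Finset.mem_union_right _ hv⟩
      refine ⟨C, ?_, hu, hv⟩
      rw [hp]
      simp [h1, h2, hC]
    · exact ⟨_, hAB, Finset.mem_union_left _ hu, Finset.mem_union_right _ hv⟩
    · exact ⟨_, hAB, Finset.mem_union_right _ hu, Finset.mem_union_left _ hv⟩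

lemma merge_exists {n : ℕ} (π : Finpartition (Finset.Icc 1 (n + 1) : Finset ℕ)) {x y : ℕ}
    (hx : 1 ≤ x ∧ x ≤ n + 1) (hy : 1 ≤ y ∧ y ≤ n + 1) (h : ¬ Rel π x y) :
    ∃ π', MergeAt n π π' x y := by
  obtain ⟨A, hA, hxA⟩ := π.exists_mem (Finset.mem_Icc.2 hx)
  obtain ⟨B, hB, hyB⟩ := π.exists_mem (Finset.mem_Icc.2 hy)
  have hne : A ≠ B := by
    rintro rfl
    exact h ⟨A, hA, hxA, hyB⟩
  refine ⟨Finpartition.ofExistsUnique (insert (A ∪ B) ((π.parts.erase A).erase B)) ?_ ?_ ?_,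
    A, hA, B, hB, hne, hxA, hyB, rfl⟩
  · intro p hp
    simp only [Finset.mem_insert, Finset.mem_erase] at hp
    rcases hp with rfl | ⟨_, _, hp⟩
    · exact Finset.union_subset (π.subset hA) (π.subset hB)
    · exact π.subset hp
  · intro a ha
    obtain ⟨C, hC, haC⟩ := π.exists_mem ha
    by_cases hAB : a ∈ A ∪ B
    · refine ⟨A ∪ B, ⟨Finset.mem_insert_self _ _, hAB⟩, ?_⟩
      rintro D ⟨hD, haD⟩
      simp only [Finset.mem_insert, Finset.mem_erase] at hD
      rcases hD with rfl | ⟨h1, h2, hD⟩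
      · rfl
      · rcases Finset.mem_union.1 hAB with h | h
        · exact absurd (π.eq_of_mem_parts hD hA haD h) h2
        · exact absurd (π.eq_of_mem_parts hD hB haD h) h1
    · rw [Finset.mem_union, not_or] at hAB
      refine ⟨C, ⟨?_, haC⟩, ?_⟩
      · simp only [Finset.mem_insert, Finset.mem_erase]
        refine Or.inr ⟨?_, ?_, hC⟩
        · rintro rfl; exact hAB.2 haC
        · rintro rfl; exact hAB.1 haC
      · rintro D ⟨hD, haD⟩
        simp only [Finset.mem_insert, Finset.mem_erase] at hD
        rcases hD with rfl | ⟨h1, h2, hD⟩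
        · exact absurd haD (by simp [hAB])
        · exact π.eq_of_mem_parts hD hC haD haC
  · simp only [Finset.mem_insert, Finset.mem_erase]
    rintro (h | ⟨_, _, h⟩)
    · have : x ∈ A ∪ B := Finset.mem_union_left _ hxA
      simp [← h] at this
    · exact π.empty_notMem_parts h

lemma merge_unique {n : ℕ} {π π' π'' : Finpartition (Finset.Icc 1 (n + 1) : Finset ℕ)} {x y : ℕ}
    (h : MergeAt n π π' x y) (h' : MergeAt n π π'' x y) : π' = π'' := by
  obtain ⟨A, hA, B, hB, hne, hx, hy, hp⟩ := h
  obtain ⟨A', hA', B', hB', hne', hx', hy', hp'⟩ := h'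
  obtain rfl := π.eq_of_mem_parts hA hA' hx hx'
  obtain rfl := π.eq_of_mem_parts hB hB' hy hy'
  ext1
  rw [hp, hp']

/-- prefix graph -/
def G {k : ℕ} (c : Fin k → ℕ × ℕ) (s : ℕ) : SimpleGraph ℕ :=
  SimpleGraph.fromEdgeSet {e : Sym2 ℕ | ∃ a : Fin k, a.val < s ∧ e = s((c a).1, (c a).2)}

lemma G_top {k : ℕ} (c : Fin k → ℕ × ℕ) : G c k = chordGraphF c := by
  unfold G chordGraphF
  congr 1
  ext e
  simp

lemma G_zero {k : ℕ} (c : Fin k → ℕ × ℕ) : G c 0 = ⊥ := by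
  ext; simp [G]

lemma G_mono {k : ℕ} (c : Fin k → ℕ × ℕ) {s t : ℕ} (h : s ≤ t) : G c s ≤ G c t := by
  apply SimpleGraph.fromEdgeSet_mono
  rintro e ⟨a, ha, he⟩
  exact ⟨a, by omega, he⟩

lemma G_succ {k : ℕ} (c : Fin k → ℕ × ℕ) (a : Fin k) :
    G c (a.val + 1) = G c a.val ⊔ SimpleGraph.edge (c a).1 (c a).2 := by
  unfold G SimpleGraph.edge
  rw [← SimpleGraph.fromEdgeSet_union]
  congr 1
  ext e
  simp only [Set.mem_ofPred_eq, Set.mem_union, Set.mem_singleton_iff]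
  constructor
  · rintro ⟨b, hb, he⟩
    rcases Nat.lt_succ_iff_lt_or_eq.1 hb with h | h
    · exact Or.inl ⟨b, h, he⟩
    · obtain rfl := Fin.ext h
      exact Or.inr he
  · rintro (⟨b, hb, he⟩ | he)
    · exact ⟨b, by omega, he⟩
    · exact ⟨a, by omega, he⟩

lemma G_adj_lt {k : ℕ} {c : Fin k → ℕ × ℕ} (hc : ∀ a, (c a).1 < (c a).2) {s p q : ℕ}
    (hpq : p < q) (h : (G c s).Adj p q) : ∃ a : Fin k, a.val < s ∧ (c a).1 = p ∧ (c a).2 = q := by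
  simp only [G, SimpleGraph.fromEdgeSet_adj, Set.mem_ofPred_eq] at h
  obtain ⟨⟨a, ha, he⟩, _⟩ := h
  have := hc a
  rw [Sym2.eq_iff] at he
  exact ⟨a, ha, by omega, by omega⟩

lemma G_adj {k : ℕ} {c : Fin k → ℕ × ℕ} (hc : ∀ a, (c a).1 < (c a).2) {s : ℕ}
    (a : Fin k) (h : a.val < s) : (G c s).Adj (c a).1 (c a).2 := by
  simp only [G, SimpleGraph.fromEdgeSet_adj, Set.mem_ofPred_eq]
  exact ⟨⟨a, h, rfl⟩, (hc a).ne⟩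

lemma reach_inv {H : SimpleGraph ℕ} (S : ℕ → Prop) {u v : ℕ} (h : H.Reachable u v) (hu : S u)
    (hs : ∀ p q, H.Reachable u p → S p → H.Adj p q → S q) : S v := by
  have h' := (SimpleGraph.reachable_iff_reflTransGen u v).1 h
  have : H.Reachable u v ∧ S v := by
    clear h
    induction h' with
    | refl => exact ⟨SimpleGraph.Reachable.refl _, hu⟩
    | tail _ h2 ih => exact ⟨ih.1.trans h2.reachable, hs _ _ ih.1 ih.2 h2⟩
  exact this.2

lemma reach_sup_edge (H : SimpleGraph ℕ) (x y : ℕ) (hxy : x ≠ y) (u v : ℕ) :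
    (H ⊔ SimpleGraph.edge x y).Reachable u v ↔
      H.Reachable u v ∨ (H.Reachable u x ∧ H.Reachable y v) ∨
        (H.Reachable u y ∧ H.Reachable x v) := by
  have hle : H ≤ H ⊔ SimpleGraph.edge x y := le_sup_left
  have hadj : (H ⊔ SimpleGraph.edge x y).Reachable x y := by
    apply SimpleGraph.Adj.reachable
    simp [SimpleGraph.edge_adj, hxy]
  constructor
  · intro h
    refine reach_inv (fun v => H.Reachable u v ∨ (H.Reachable u x ∧ H.Reachable y v) ∨
        (H.Reachable u y ∧ H.Reachable x v)) h (Or.inl (SimpleGraph.Reachable.refl _)) ?_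
    intro p q _ hp hpq
    rw [SimpleGraph.sup_adj, SimpleGraph.edge_adj] at hpq
    rcases hpq with hpq | ⟨⟨rfl, rfl⟩ | ⟨rfl, rfl⟩, _⟩
    · have := hpq.reachable
      rcases hp with hp | ⟨h1, h2⟩ | ⟨h1, h2⟩
      · exact Or.inl (hp.trans this)
      · exact Or.inr (Or.inl ⟨h1, h2.trans this⟩)
      · exact Or.inr (Or.inr ⟨h1, h2.trans this⟩)
    · rcases hp with hp | ⟨h1, h2⟩ | ⟨h1, h2⟩
      · exact Or.inr (Or.inl ⟨hp, SimpleGraph.Reachable.refl _⟩)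
      · exact Or.inr (Or.inl ⟨h1, SimpleGraph.Reachable.refl _⟩)
      · exact Or.inl h1
    · rcases hp with hp | ⟨h1, h2⟩ | ⟨h1, h2⟩
      · exact Or.inr (Or.inr ⟨hp, SimpleGraph.Reachable.refl _⟩)
      · exact Or.inl h1
      · exact Or.inr (Or.inr ⟨h1, SimpleGraph.Reachable.refl _⟩)
  · rintro (h | ⟨h1, h2⟩ | ⟨h1, h2⟩)
    · exact h.mono hle
    · exact (h1.mono hle).trans (hadj.trans (h2.mono hle))
    · exact (h1.mono hle).trans (hadj.symm.trans (h2.mono hle))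

lemma nc_graph {H : SimpleGraph ℕ}
    (hH : ∀ p q v w, H.Adj p q → H.Adj v w → p < v → v < q → q < w → False)
    {a b c d : ℕ} (h1 : a < b) (h2 : b < c) (h3 : c < d)
    (hac : H.Reachable a c) (hbd : H.Reachable b d) : H.Reachable a b := by
  by_contra hn
  have := reach_inv (fun p => ¬ (b < p ∧ p < d)) hac (by omega) ?_
  · omega
  intro p q hp hSp hpq hq
  have hpb : p ≠ b := by rintro rfl; exact hn hp
  have hpd : p ≠ d := by rintro rfl; exact hn (hp.trans hbd.symm)
  have hq' := hp.trans hpq.reachable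
  have key : ∀ v w, H.Reachable b v → H.Adj v w → w ≠ p ∧ w ≠ q := by
    intro v w hv hvw
    have := hv.trans hvw.reachable
    constructor
    · rintro rfl; exact hn (hp.trans this.symm)
    · rintro rfl; exact hn (hq'.trans this.symm)
  rcases (by omega : p < b ∨ d < p) with hlt | hlt
  · have := reach_inv (fun v => p < v ∧ v < q) hbd (by omega) ?_
    · omega
    intro v w hv hSv hvw
    have := key v w hv hvw
    by_contra hw
    rcases (by omega : w < p ∨ q < w) with h | h
    · exact hH w v p q hvw.symm hpq h hSv.1 hSv.2
    · exact hH p q v w hpq hvw hSv.1 hSv.2 h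
  · have := reach_inv (fun v => ¬ (q ≤ v ∧ v ≤ p)) hbd (by omega) ?_
    · omega
    intro v w hv hSv hvw hw
    have := key v w hv hvw
    rcases (by omega : v < q ∨ p < v) with h | h
    · exact hH v w q p hvw hpq.symm h (by omega) (by omega)
    · exact hH q p w v hpq.symm hvw.symm (by omega) (by omega) h

lemma reach_iff {n k : ℕ} {c : Fin k → ℕ × ℕ} (hc : ∀ a, (c a).1 < (c a).2 ∧ (c a).2 ≤ n)
    (P : ℕ → Finpartition (Finset.Icc 1 (n + 1) : Finset ℕ))
    (h0 : (P 0).parts = (Finset.Icc 1 (n + 1)).image (fun a => ({a} : Finset ℕ)))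
    (m : ℕ) (hm : m ≤ k)
    (hP : ∀ a : Fin k, a.val < m → MergeAt n (P a.val) (P (a.val + 1)) ((c a).1 + 1) ((c a).2 + 1)) :
    ∀ u v, u ≤ n → v ≤ n → ((G c m).Reachable u v ↔ Rel (P m) (u + 1) (v + 1)) := by
  induction m with
  | zero =>
    intro u v hu hv
    rw [G_zero, SimpleGraph.reachable_bot]
    constructor
    · rintro rfl
      exact Rel.refl _ (by omega) (by omega)
    · rintro ⟨B, hB, h1, h2⟩
      rw [h0, Finset.mem_image] at hB
      obtain ⟨a, _, rfl⟩ := hB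
      simp at h1 h2
      omega
  | succ m ih =>
    intro u v hu hv
    have ih := ih (by omega) (fun a ha => hP a (by omega))
    have hM := (merge_rel (hP ⟨m, by omega⟩ (by simp))).2 (u + 1) (v + 1)
    have hcm := hc ⟨m, by omega⟩
    rw [hM, show m + 1 = (⟨m, by omega⟩ : Fin k).val + 1 from rfl, G_succ,
      reach_sup_edge _ _ _ (by omega)]
    simp only
    rw [ih u v hu hv, ih _ _ hu (by omega), ih _ _ (by omega) hv, ih _ _ hu (by omega),
      ih _ _ (by omega) hv]

/-- part of validity -/
lemma chord_unique_aux {n k : ℕ} {c : Fin k → ℕ × ℕ}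
    (hc : ∀ a, (c a).1 < (c a).2 ∧ (c a).2 ≤ n)
    (hnc : ∀ a b : Fin k, ¬ Crosses (fun _ => false) (c a) (c b))
    (hl : ∀ a b : Fin k, SharesEndpoint (c a) (c b) →
          Cw (fun _ => false) (c a) (c b) → b < a) (a : Fin k)
    (hr : ¬ (G c a.val).Reachable (c a).1 (c a).2) :
    (∀ z, (G c a.val).Reachable (c a).1 z → ¬ ((c a).1 < z ∧ z < (c a).2)) ∧
    (∀ z, (G c a.val).Reachable (c a).2 z → (c a).1 < z ∧ z ≤ (c a).2) := by
  have hca := hc a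
  have hlt : ∀ a, (c a).1 < (c a).2 := fun a => (hc a).1
  have hno : ∀ b : Fin k, ¬ ((c a).1 < (c b).1 ∧ (c b).1 < (c a).2 ∧ (c a).2 < (c b).2) ∧
      ¬ ((c b).1 < (c a).1 ∧ (c a).1 < (c b).2 ∧ (c b).2 < (c a).2) := by
    intro b
    have := hnc a b
    simp only [Crosses] at this
    constructor <;> intro h <;> apply this <;> simp <;> omega
  have hlab : ∀ b : Fin k, b < a → ¬ ((c a).2 = (c b).1) ∧
      ¬ ((c b).1 = (c a).1 ∧ (c b).2 < (c a).2) ∧ ¬ ((c b).2 = (c a).2 ∧ (c b).1 < (c a).1) := by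
    intro b hb
    have := hl b a
    simp only [SharesEndpoint, Cw] at this
    refine ⟨?_, ?_, ?_⟩ <;> intro h <;>
      exact absurd (this (by omega) (by simp; omega)) (by omega)
  constructor
  · intro z hz
    refine reach_inv (fun z => ¬ ((c a).1 < z ∧ z < (c a).2)) hz (by omega) ?_
    intro p q hp hSp hpq hq
    have hpy : p ≠ (c a).2 := by rintro rfl; exact hr hp
    rcases lt_trichotomy p q with h | h | h
    · obtain ⟨b, hb, e1, e2⟩ := G_adj_lt hlt h hpq
      have := hno b; have := hlab b hb
      omega
    · exact hpq.ne h
    · obtain ⟨b, hb, e1, e2⟩ := G_adj_lt hlt h hpq.symm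
      have := hno b; have := hlab b hb
      omega
  · intro z hz
    refine reach_inv (fun z => (c a).1 < z ∧ z ≤ (c a).2) hz (by omega) ?_
    intro p q hp hSp hpq
    have hqx : q ≠ (c a).1 := by rintro rfl; exact hr (hp.trans hpq.reachable).symm
    by_contra hq
    rcases lt_trichotomy p q with h | h | h
    · obtain ⟨b, hb, e1, e2⟩ := G_adj_lt hlt h hpq
      have := hno b; have := hlab b hb
      omega
    · exact hpq.ne h
    · obtain ⟨b, hb, e1, e2⟩ := G_adj_lt hlt h hpq.symm
      have := hno b; have := hlab b hb
      omega

lemma chord_exists_aux {n : ℕ} {π π' : Finpartition (Finset.Icc 1 (n + 1) : Finset ℕ)}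
    (h1 : NoncrossingPart n π) (h2 : NoncrossingPart n π')
    {A B : Finset ℕ} (hA : A ∈ π.parts) (hB : B ∈ π.parts) (hne : A ≠ B)
    (hp : π'.parts = insert (A ∪ B) ((π.parts.erase A).erase B))
    (hmin : A.min' (π.nonempty_of_mem_parts hA) < B.min' (π.nonempty_of_mem_parts hB)) :
    ∃ x y, x < y ∧ MergeAt n π π' x y ∧
      (∀ z, Rel π x z → ¬ (x < z ∧ z < y)) ∧
      (∀ z, Rel π y z → (x < z ∧ z ≤ y)) ∧
      (∀ u v, Rel π u v → ¬ (u < x ∧ x < v ∧ v < y) ∧ ¬ (x < u ∧ u < y ∧ y < v)) := by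
  have nA := π.nonempty_of_mem_parts hA
  have nB := π.nonempty_of_mem_parts hB
  set mB := B.min' nB with hmB
  have hF : (A.filter (· < mB)).Nonempty := ⟨A.min' nA, by simp [Finset.min'_mem, hmin]⟩
  set x := (A.filter (· < mB)).max' hF with hx
  set y := B.max' nB with hy
  have hxm : x ∈ A.filter (· < mB) := Finset.max'_mem _ _
  rw [Finset.mem_filter] at hxm
  have hyB : y ∈ B := Finset.max'_mem _ _
  have hmBB : mB ∈ B := Finset.min'_mem _ _
  have hmy : mB ≤ y := Finset.min'_le _ _ hyB
  have hM : MergeAt n π π' x y := ⟨A, hA, B, hB, hne, hxm.1, hyB, hp⟩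
  have hR := merge_rel hM
  rw [nc_iff] at h1 h2
  have hcA : ∀ z, Rel π x z → ¬ (x < z ∧ z < y) := by
    intro z hz hz'
    have hzA := (Rel.iff_mem hA hxm.1).1 hz
    have h3 : ¬ z < mB := by
      intro h
      have := Finset.le_max' (A.filter (· < mB)) z (by simp [hzA, h])
      omega
    have h4 : z ≠ mB := by
      rintro h
      exact hne (π.eq_of_mem_parts hA hB (h ▸ hzA) hmBB)
    have := h1 x mB z y hxm.2 (by omega) hz'.2 hz ⟨B, hB, hmBB, hyB⟩
    exact hR.1 (this.trans ⟨B, hB, hmBB, hyB⟩)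
  have hcB : ∀ z, Rel π y z → (x < z ∧ z ≤ y) := by
    intro z hz
    have hzB := (Rel.iff_mem hB hyB).1 hz
    exact ⟨lt_of_lt_of_le hxm.2 (Finset.min'_le _ _ hzB), Finset.le_max' _ _ hzB⟩
  have hxx : Rel π x x := ⟨A, hA, hxm.1, hxm.1⟩
  have hyy : Rel π y y := ⟨B, hB, hyB, hyB⟩
  have hxy' : Rel π' x y := (hR.2 x y).2 (Or.inr (Or.inl ⟨hxx, hyy⟩))
  refine ⟨x, y, by omega, hM, hcA, hcB, ?_⟩
  intro u v huv
  have huv' : Rel π' u v := (hR.2 u v).2 (Or.inl huv)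
  constructor
  · rintro ⟨l1, l2, l3⟩
    have := h2 u x v y l1 l2 l3 huv' hxy'
    rcases (hR.2 u x).1 this with h | ⟨_, h⟩ | ⟨h, _⟩
    · exact hcA v (h.symm.trans huv) ⟨l2, l3⟩
    · exact hR.1 h.symm
    · have := hcB u h.symm
      omega
  · rintro ⟨l1, l2, l3⟩
    have := h2 x u y v l1 l2 l3 hxy' huv'
    rcases (hR.2 x u).1 this with h | ⟨_, h⟩ | ⟨h, _⟩
    · exact hcA u h ⟨l1, l2⟩
    · have := hcB v (h.trans huv)
      omega
    · exact hR.1 h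

lemma chord_exists {n : ℕ} {π π' : Finpartition (Finset.Icc 1 (n + 1) : Finset ℕ)}
    (h1 : NoncrossingPart n π) (h2 : NoncrossingPart n π') (h : IsMergeStep n π π') :
    ∃ e : ℕ × ℕ, (e.1 < e.2 ∧ e.2 ≤ n) ∧ MergeAt n π π' (e.1 + 1) (e.2 + 1) ∧
      (∀ z, Rel π (e.1 + 1) (z + 1) → ¬ (e.1 < z ∧ z < e.2)) ∧
      (∀ z, Rel π (e.2 + 1) (z + 1) → (e.1 < z ∧ z ≤ e.2)) ∧
      (∀ u v, Rel π (u + 1) (v + 1) → ¬ (u < e.1 ∧ e.1 < v ∧ v < e.2) ∧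
        ¬ (e.1 < u ∧ u < e.2 ∧ e.2 < v)) := by
  have key : ∃ x y, x < y ∧ MergeAt n π π' x y ∧
      (∀ z, Rel π x z → ¬ (x < z ∧ z < y)) ∧
      (∀ z, Rel π y z → (x < z ∧ z ≤ y)) ∧
      (∀ u v, Rel π u v → ¬ (u < x ∧ x < v ∧ v < y) ∧ ¬ (x < u ∧ u < y ∧ y < v)) := by
    obtain ⟨A, hA, B, hB, hne, hp⟩ := h
    rcases lt_trichotomy (A.min' (π.nonempty_of_mem_parts hA))
      (B.min' (π.nonempty_of_mem_parts hB)) with h | h | h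
    · exact chord_exists_aux h1 h2 hA hB hne hp h
    · exfalso
      apply hne
      apply π.eq_of_mem_parts hA hB (Finset.min'_mem _ _)
      rw [h]
      exact Finset.min'_mem _ _
    · refine chord_exists_aux h1 h2 hB hA hne.symm ?_ h
      rw [hp, Finset.union_comm, Finset.erase_right_comm]
  obtain ⟨x, y, hxy, hM, ha, hb, hcr⟩ := key
  obtain ⟨A, hA, B, hB, -, hx, hy, -⟩ := id hM
  have hx' := Finset.mem_Icc.1 (π.subset hA hx)
  have hy' := Finset.mem_Icc.1 (π.subset hB hy)
  obtain ⟨x, rfl⟩ : ∃ x', x = x' + 1 := ⟨x - 1, by omega⟩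
  obtain ⟨y, rfl⟩ : ∃ y', y = y' + 1 := ⟨y - 1, by omega⟩
  refine ⟨(x, y), by simp only; omega, hM, ?_, ?_, ?_⟩
  · intro z hz
    have := ha _ hz
    simp only; omega
  · intro z hz
    have := hb _ hz
    simp only; omega
  · intro u v huv
    have := hcr _ _ huv
    simp only; omega

open Classical in
/-- recursive construction of the chain -/
noncomputable def chain (n : ℕ) {k : ℕ} (c : Fin k → ℕ × ℕ) :
    ℕ → Finpartition (Finset.Icc 1 (n + 1) : Finset ℕ)
  | 0 => ⊥
  | s + 1 => if h : ∃ (hs : s < k) (π' : Finpartition (Finset.Icc 1 (n + 1) : Finset ℕ)),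
      MergeAt n (chain n c s) π' ((c ⟨s, hs⟩).1 + 1) ((c ⟨s, hs⟩).2 + 1)
    then h.choose_spec.choose else ⊥

lemma G_not_reach {k : ℕ} {c : Fin k → ℕ × ℕ} (hc : ∀ a, (c a).1 < (c a).2)
    (hinj : Function.Injective c) (hac : (chordGraphF c).IsAcyclic) (a : Fin k) :
    ¬ (G c a.val).Reachable (c a).1 (c a).2 := by
  intro h
  have h1 : (G c (a.val + 1)).IsAcyclic := by
    refine SimpleGraph.IsAcyclic.anti ?_ hac
    rw [← G_top]
    exact G_mono c a.isLt
  rw [G_succ, SimpleGraph.isAcyclic_sup_fromEdgeSet_iff] at h1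
  rcases h1.2 h with h | h
  · exact (hc a).ne h
  · obtain ⟨b, hb, e1, e2⟩ := G_adj_lt hc (hc a) h
    have := hinj (Prod.ext e1 e2)
    subst this
    exact lt_irrefl _ hb

lemma chain_merge {n k : ℕ} {c : Fin k → ℕ × ℕ}
    (hc : ∀ a, (c a).1 < (c a).2 ∧ (c a).2 ≤ n)
    (hinj : Function.Injective c) (hac : (chordGraphF c).IsAcyclic) (s : ℕ) (hs : s < k) :
    MergeAt n (chain n c s) (chain n c (s + 1)) ((c ⟨s, hs⟩).1 + 1) ((c ⟨s, hs⟩).2 + 1) := by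
  induction s using Nat.strong_induction_on with
  | _ s ih =>
    have hR := reach_iff hc (chain n c) (by ext; simp [chain]) s hs.le
      (fun a ha => ih a.val ha a.isLt)
    have hca := hc ⟨s, hs⟩
    have hn := G_not_reach (fun a => (hc a).1) hinj hac ⟨s, hs⟩
    rw [hR _ _ (by omega) (by omega)] at hn
    have hex : ∃ (hs : s < k) (π' : Finpartition (Finset.Icc 1 (n + 1) : Finset ℕ)),
      MergeAt n (chain n c s) π' ((c ⟨s, hs⟩).1 + 1) ((c ⟨s, hs⟩).2 + 1) :=
        ⟨hs, merge_exists _ (by omega) (by omega) hn⟩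
    have e : chain n c (s + 1) = hex.choose_spec.choose := by
      rw [chain, dif_pos hex]
    rw [e]
    exact hex.choose_spec.choose_spec

/-- Theorem 6.5: for `ε = (−,…,−)`, the map sending a good-labeled strand diagram with `k`
strands (encoded as `c : Fin k → ℕ × ℕ`, where `c ℓ` is the chord with label `ℓ+1`) to the
chain `(π_1,…,π_{k+1})` of noncrossing partitions of `{1,…,n+1}` — `π_1` the partition into
singletons and `π_{s+1}` obtained from `π_s` by merging the blocks containing `i_s+1` and
`j_s+1` where `(i_s, j_s)` is the chord labeled `s` — is a bijection onto the set of chains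
of noncrossing partitions starting at the singleton partition in which each step merges two
distinct blocks. -/
theorem good_labeled_diagrams_biject_with_nc_chains (n k : ℕ) (hn : 1 ≤ n)
    (hk1 : 1 ≤ k) (hkn : k ≤ n) :
    (∀ c : Fin k → ℕ × ℕ,
      ((∀ a, (c a).1 < (c a).2 ∧ (c a).2 ≤ n) ∧ Function.Injective c ∧
        IsDiagramF (fun _ => false) c ∧
        (∀ a b : Fin k, SharesEndpoint (c a) (c b) →
          Cw (fun _ => false) (c a) (c b) → b < a)) →
      ∃! π : Fin (k + 1) → Finpartition (Finset.Icc 1 (n + 1) : Finset ℕ),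
        ((π 0).parts = (Finset.Icc 1 (n + 1)).image (fun a => ({a} : Finset ℕ)) ∧
          (∀ s, NoncrossingPart n (π s)) ∧
          (∀ a : Fin k, IsMergeStep n (π a.castSucc) (π a.succ))) ∧
        (∀ a : Fin k, MergeAt n (π a.castSucc) (π a.succ) ((c a).1 + 1) ((c a).2 + 1))) ∧
    (∀ π : Fin (k + 1) → Finpartition (Finset.Icc 1 (n + 1) : Finset ℕ),
      ((π 0).parts = (Finset.Icc 1 (n + 1)).image (fun a => ({a} : Finset ℕ)) ∧
        (∀ s, NoncrossingPart n (π s)) ∧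
        (∀ a : Fin k, IsMergeStep n (π a.castSucc) (π a.succ))) →
      ∃! c : Fin k → ℕ × ℕ,
        ((∀ a, (c a).1 < (c a).2 ∧ (c a).2 ≤ n) ∧ Function.Injective c ∧
          IsDiagramF (fun _ => false) c ∧
          (∀ a b : Fin k, SharesEndpoint (c a) (c b) →
            Cw (fun _ => false) (c a) (c b) → b < a)) ∧
        (∀ a : Fin k, MergeAt n (π a.castSucc) (π a.succ) ((c a).1 + 1) ((c a).2 + 1))) := by
  constructor
  · rintro c ⟨hc, hinj, ⟨hnc, hac⟩, hl⟩
    have hM := chain_merge hc hinj hac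
    have h0 : (chain n c 0).parts = (Finset.Icc 1 (n + 1)).image (fun a => ({a} : Finset ℕ)) := by
      ext; simp [chain]
    refine ⟨fun s => chain n c s.val, ⟨⟨h0, ?_, ?_⟩, ?_⟩, ?_⟩
    · intro s
      have hR := reach_iff hc (chain n c) h0 s.val (by omega) (fun a _ => hM a.val a.isLt)
      rw [nc_iff]
      intro x y z w l1 l2 l3 hxz hyw
      have b1 := hxz.bd
      have b2 := hyw.bd
      obtain ⟨x, rfl⟩ : ∃ x', x = x' + 1 := ⟨x - 1, by omega⟩
      obtain ⟨y, rfl⟩ : ∃ x', y = x' + 1 := ⟨y - 1, by omega⟩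
      obtain ⟨z, rfl⟩ : ∃ x', z = x' + 1 := ⟨z - 1, by omega⟩
      obtain ⟨w, rfl⟩ : ∃ x', w = x' + 1 := ⟨w - 1, by omega⟩
      rw [← hR _ _ (by omega) (by omega)] at hxz hyw ⊢
      refine nc_graph ?_ (by omega : x < y) (by omega : y < z) (by omega : z < w) hxz hyw
      intro p q v w hpq hvw m1 m2 m3
      obtain ⟨a, -, e1, e2⟩ := G_adj_lt (fun a => (hc a).1) (by omega) hpq
      obtain ⟨b, -, e3, e4⟩ := G_adj_lt (fun a => (hc a).1) (by omega) hvw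
      apply hnc a b
      exact Or.inl ⟨by omega, by omega, by omega, rfl⟩
    · intro a
      obtain ⟨A, hA, B, hB, hne, -, -, hp⟩ := hM a.val a.isLt
      exact ⟨A, hA, B, hB, hne, hp⟩
    · intro a
      exact hM a.val a.isLt
    · rintro π ⟨⟨hπ0, -, -⟩, hπ⟩
      funext s
      induction s using Fin.induction with
      | zero =>
        ext1
        rw [hπ0]
        exact h0.symm
      | succ a ih =>
        have h1 := hπ a
        rw [ih] at h1
        exact merge_unique h1 (hM a.val a.isLt)
  · rintro π ⟨hπ0, hπnc, hπm⟩
    let P : ℕ → Finpartition (Finset.Icc 1 (n + 1) : Finset ℕ) :=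
      fun s => if h : s < k + 1 then π ⟨s, h⟩ else ⊥
    have hP : ∀ (s) (h : s < k + 1), P s = π ⟨s, h⟩ := fun s h => dif_pos h
    have hP0 : (P 0).parts = (Finset.Icc 1 (n + 1)).image (fun a => ({a} : Finset ℕ)) := by
      rw [hP 0 (by omega)]; exact hπ0
    have hP1 : ∀ a : Fin k, P a.val = π a.castSucc := fun a => hP _ _
    have hP2 : ∀ a : Fin k, P (a.val + 1) = π a.succ := fun a => hP _ (by omega)
    have hreach : ∀ c : Fin k → ℕ × ℕ, (∀ a, (c a).1 < (c a).2 ∧ (c a).2 ≤ n) →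
        (∀ a : Fin k, MergeAt n (π a.castSucc) (π a.succ) ((c a).1 + 1) ((c a).2 + 1)) →
        ∀ a : Fin k, ∀ u v, u ≤ n → v ≤ n →
          ((G c a.val).Reachable u v ↔ Rel (π a.castSucc) (u + 1) (v + 1)) := by
      intro c hc hm a
      rw [← hP1]
      refine reach_iff hc P hP0 a.val a.isLt.le ?_
      intro b _
      rw [hP1, hP2]
      exact hm b
    choose c hc hm hca hcb hcr using fun a : Fin k =>
      chord_exists (hπnc a.castSucc) (hπnc a.succ) (hπm a)
    have hR := hreach c hc hm
    have hearly : ∀ a b : Fin k, b < a → Rel (π a.castSucc) ((c b).1 + 1) ((c b).2 + 1) := by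
      intro a b hb
      have := hc b
      rw [← hR a _ _ (by omega) (by omega)]
      exact (G_adj (fun a => (hc a).1) b hb).reachable
    have hnr : ∀ a, ¬ Rel (π a.castSucc) ((c a).1 + 1) ((c a).2 + 1) :=
      fun a => (merge_rel (hm a)).1
    refine ⟨c, ⟨⟨hc, ?_, ⟨?_, ?_⟩, ?_⟩, hm⟩, ?_⟩
    · intro a b hab
      rcases lt_trichotomy a b with h | h | h
      · have := hearly b a h
        rw [hab] at this
        exact absurd this (hnr b)
      · exact h
      · have := hearly a b h
        rw [← hab] at this
        exact absurd this (hnr a)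
    · intro a b hcross
      simp only [Crosses, ne_eq, not_true_eq_false, and_false, and_true, or_false] at hcross
      rcases lt_trichotomy a b with h | h | h
      · have := hcr b _ _ (hearly b a h)
        omega
      · subst h; omega
      · have := hcr a _ _ (hearly a b h)
        omega
    · rw [← G_top]
      have : ∀ m, m ≤ k → (G c m).IsAcyclic := by
        intro m
        induction m with
        | zero =>
          intro _
          rw [G_zero]
          exact SimpleGraph.isAcyclic_bot
        | succ m ih =>
          intro hmk
          have e := G_succ c ⟨m, hmk⟩
          simp only at e
          rw [e]
          have hcm := hc ⟨m, hmk⟩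
          refine SimpleGraph.IsAcyclic.sup_edge_of_not_reachable ?_ (ih (by omega))
          intro hh
          exact hnr ⟨m, hmk⟩ ((hR ⟨m, hmk⟩ _ _ (by omega) (by omega)).1 hh)
      exact this k le_rfl
    · intro a b _ hcw
      simp only [Cw, Bool.false_eq_true, and_false, and_true, or_false, false_or] at hcw
      have h1 := hc a
      have h2 := hc b
      by_contra hab
      rcases (not_lt.1 hab).lt_or_eq with h | h
      · have he := hearly b a h
        rcases hcw with hcw | ⟨e, hcw⟩ | ⟨e, hcw⟩
        · rw [← hcw] at he
          have := hcb b _ he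
          omega
        · rw [e] at he
          exact hca b _ he (by omega)
        · rw [e] at he
          have := hcb b _ he.symm
          omega
      · subst h
        omega
    · rintro c' ⟨⟨hc', hinj', ⟨hnc', hac'⟩, hl'⟩, hm'⟩
      funext a
      have hR' := hreach c' hc' hm' a
      have h1 := hc a
      have h2 := hc' a
      obtain ⟨u1, u2⟩ := chord_unique_aux hc' hnc' hl' a
        (G_not_reach (fun a => (hc' a).1) hinj' hac' a)
      have hrel : Rel (π a.succ) ((c a).1 + 1) ((c a).2 + 1) :=
        ((merge_rel (hm a)).2 _ _).2 (Or.inr (Or.inl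
          ⟨Rel.refl _ (by omega) (by omega), Rel.refl _ (by omega) (by omega)⟩))
      rcases ((merge_rel (hm' a)).2 _ _).1 hrel with h | ⟨r1, r2⟩ | ⟨r1, r2⟩
      · exact absurd h (hnr a)
      · have v1 := hca a _ r1
        have v2 := hcb a _ r2.symm
        have v3 := u1 _ ((hR' _ _ (by omega) (by omega)).2 r1.symm)
        have v4 := u2 _ ((hR' _ _ (by omega) (by omega)).2 r2)
        apply Prod.ext <;> omega
      · have v2 := hcb a _ r2.symm
        have v4 := u2 _ ((hR' _ _ (by omega) (by omega)).2 r1.symm)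
        omega

end ESPaper
end
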